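/- arXiv:1107.1074 — 3 statements merged into one kernel-verified Lean document; each statement's English description precedes it below -/
import Mathlib

section
/- Let d ≥ 3, r ∈ ℤ^d, and set m := ⌊d/2⌋ - 1 and K_d(λ; r) := (G_0(0, r) - G_λ(0, r))/λ for λ > 0. Then the m-th derivative of K_d(·; r) satisfies, as λ → 0+: (-1)^m K_d^{(m)}(λ; r) ~ 2γ_d √π/((d-2)√λ) if d is odd, and (-1)^m K_d^{(m)}(λ; r) ~ 2γ_d/((d-2)λ) if d is even. -/
open MeasureTheory Real Filter Topology Asymptotics

/-- Fourier symbol `φ(θ) = ∑_z a(z) cos⟨z,θ⟩` of the random walk on `ℤ^d`. -/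
noncomputable def phiSymb (d : ℕ) (a : (Fin d → ℤ) → ℝ) (θ : Fin d → ℝ) : ℝ :=
  ∑' z : Fin d → ℤ, a z * Real.cos (∑ i, (z i : ℝ) * θ i)

/-- Transition probability `p(t;x,y) = (2π)^{-d} ∫_{[-π,π]^d} e^{φ(θ)t} cos⟨θ,y-x⟩ dθ`. -/
noncomputable def ptrans (d : ℕ) (a : (Fin d → ℤ) → ℝ) (t : ℝ) (x y : Fin d → ℤ) : ℝ :=
  ((2 * π) ^ d)⁻¹ *
    ∫ θ in Set.Icc (fun _ : Fin d => -π) (fun _ : Fin d => π),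
      Real.exp (phiSymb d a θ * t) * Real.cos (∑ i, θ i * ((y i : ℝ) - (x i : ℝ)))

/-- Laplace transform `G_λ(x,y) = ∫_0^∞ e^{-λt} p(t;x,y) dt` (Green's function at `λ = 0`). -/
noncomputable def Glam (d : ℕ) (a : (Fin d → ℤ) → ℝ) (lam : ℝ) (x y : Fin d → ℤ) : ℝ :=
  ∫ t in Set.Ioi (0 : ℝ), Real.exp (-lam * t) * ptrans d a t x y

/-- Hessian matrix `φ''(0)`, with entries `-∑_z a(z) z_i z_j`. -/
noncomputable def hessPhi (d : ℕ) (a : (Fin d → ℤ) → ℝ) : Matrix (Fin d) (Fin d) ℝ :=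
  Matrix.of fun i j => -∑' z : Fin d → ℤ, a z * (z i : ℝ) * (z j : ℝ)

/-- `γ_d = (2π)^{-d/2} |det φ''(0)|^{-1/2}`. -/
noncomputable def gammaConst (d : ℕ) (a : (Fin d → ℤ) → ℝ) : ℝ :=
  ((2 * π) ^ ((d : ℝ) / 2))⁻¹ * (Real.sqrt |(hessPhi d a).det|)⁻¹

/-- `ρ_d(x) = (a/(2π)^d) ∫_{[-π,π]^d} (cos⟨x,θ⟩ - 1)/φ(θ) dθ` for `x ≠ 0`, and `ρ_d(0) = 1`. -/
noncomputable def rhoConst (d : ℕ) (a : (Fin d → ℤ) → ℝ) (x : Fin d → ℤ) : ℝ :=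
  if x = 0 then 1 else
    (-(a 0) / (2 * π) ^ d) *
      ∫ θ in Set.Icc (fun _ : Fin d => -π) (fun _ : Fin d => π),
        (Real.cos (∑ i, (x i : ℝ) * θ i) - 1) / phiSymb d a θ

/-- `γ̃_d(z) = (1/(2(2π)^d)) ∫_{ℝ^d} ⟨v,z⟩² e^{⟨φ''(0)v,v⟩/2} dv`. -/
noncomputable def gammaTilde (d : ℕ) (a : (Fin d → ℤ) → ℝ) (z : Fin d → ℤ) : ℝ :=
  (2 * (2 * π) ^ d)⁻¹ *
    ∫ v : Fin d → ℝ, (∑ i, v i * (z i : ℝ)) ^ 2 *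
      Real.exp ((∑ i, (hessPhi d a).mulVec v i * v i) / 2)

/-!
The frequencies `z` with `sin² (⟨z, θ⟩ / 2) ≤ -C φ(θ)` for some constant `C` form a subgroup of
`ℤ^d`, so irreducibility gives `φ(θ) ≤ -c ‖θ‖²` on the whole cube `[-π, π]^d`. Together with
`φ(θ) ≈ ⟨φ''(0)θ, θ⟩ / 2` near the origin, Laplace's method yields the local limit theorem
`t^{d/2} p(t; x, y) → γ_d`, hence `s^{d/2 - 1} q(s) → γ_d / (d/2 - 1)` for the tail
`q(s) = ∫ₛ^∞ p(t; x, y) dt`.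

Integration by parts identifies `(G_0 - G_λ) / λ` with the Laplace transform of `q`. Differentiating
`n` times in `λ` multiplies `q` by `(-t)^n`, and an Abelian theorem turns
`t^n q(t) ~ γ_d / (d/2 - 1) t^{n + 1 - d/2}` into
`(-1)^n K^{(n)}(λ) ~ γ_d / (d/2 - 1) Γ(n + 2 - d/2) λ^{-(n + 2 - d/2)}`. For `n = ⌊d/2⌋ - 1` the
exponent `n + 2 - d/2` is `1/2` for odd `d` and `1` for even `d`, and `Γ(1/2) = √π`, `Γ(1) = 1`.
-/

section GaussianIntegrals

variable {E : Type*} [NormedAddCommGroup E] [NormedSpace ℝ E] [FiniteDimensional ℝ E]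
  [MeasurableSpace E] [BorelSpace E] (μ : Measure E) [μ.IsAddHaarMeasure]

theorem integrable_exp_neg_mul_norm_sq {c : ℝ} (hc : 0 < c) :
    Integrable (fun v : E => exp (-c * ‖v‖ ^ 2)) μ := by
  cases subsingleton_or_nontrivial E
  · have : IsFiniteMeasure μ := ⟨(Set.toFinite _).isCompact.measure_lt_top⟩
    exact Integrable.of_finite
  · rw [integrable_fun_norm_addHaar μ (f := fun y => exp (-c * y ^ 2))]
    simpa only [rpow_natCast, smul_eq_mul] using
      integrableOn_rpow_mul_exp_neg_mul_sq hc (neg_one_lt_zero.trans_le (Nat.cast_nonneg _))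

open scoped Matrix MatrixOrder in
-- Writing `M = Lᵀ L`, the substitution `w = L v` reduces to a product of one-dimensional integrals.
theorem integral_exp_neg_dotProduct_mulVec_div_two_of_posDef {ι : Type*} [Fintype ι]
    [DecidableEq ι] {M : Matrix ι ι ℝ} (hM : M.PosDef) :
    ∫ v : ι → ℝ, exp (-(v ⬝ᵥ M *ᵥ v) / 2) = √(2 * π) ^ Fintype.card ι / √M.det := by
  obtain ⟨L, rfl⟩ := CStarAlgebra.nonneg_iff_eq_star_mul_self.mp hM.posSemidef.nonneg
  have hdet : (star L * L).det = L.det ^ 2 := by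
    rw [Matrix.det_mul, Matrix.star_eq_conjTranspose, Matrix.det_conjTranspose, star_trivial, sq]
  have hL : LinearMap.det (Matrix.toLin' L) ≠ 0 := by
    rw [LinearMap.det_toLin']
    exact fun h => hM.det_pos.ne' (by simp [hdet, h])
  have hquad (v : ι → ℝ) : v ⬝ᵥ (star L * L) *ᵥ v = ∑ i, (L *ᵥ v) i ^ 2 := by
    rw [← Matrix.mulVec_mulVec, Matrix.star_eq_conjTranspose,
      Matrix.conjTranspose_eq_transpose_of_trivial, Matrix.dotProduct_mulVec,
      Matrix.vecMul_transpose, dotProduct]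
    simp only [sq]
  have hprod (w : ι → ℝ) : exp (-(∑ i, w i ^ 2) / 2) = ∏ i, exp (-(1 / 2) * w i ^ 2) := by
    rw [← exp_sum, ← Finset.mul_sum]
    ring_nf
  have hcont : Continuous fun w : ι → ℝ => exp (-(∑ i, w i ^ 2) / 2) := by fun_prop
  calc ∫ v : ι → ℝ, exp (-(v ⬝ᵥ (star L * L) *ᵥ v) / 2)
      = ∫ w, exp (-(∑ i, w i ^ 2) / 2) ∂(Measure.map (Matrix.toLin' L) volume) := by
        rw [integral_map (LinearMap.continuous_of_finiteDimensional _).aemeasurable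
          hcont.aestronglyMeasurable]
        simp only [hquad, Matrix.toLin'_apply]
    _ = |L.det|⁻¹ * ∫ w : ι → ℝ, ∏ i, exp (-(1 / 2) * w i ^ 2) := by
        rw [map_linearMap_volume_pi_eq_smul_volume_pi hL, integral_smul_measure,
          LinearMap.det_toLin', ENNReal.toReal_ofReal (abs_nonneg _), abs_inv, smul_eq_mul]
        simp only [hprod]
    _ = |L.det|⁻¹ * √(2 * π) ^ Fintype.card ι := by
        rw [integral_fintype_prod_volume_eq_pow (fun x : ℝ => exp (-(1 / 2) * x ^ 2)),
          integral_gaussian, div_div_eq_mul_div, div_one, mul_comm π 2]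
    _ = √(2 * π) ^ Fintype.card ι / √(star L * L).det := by
        rw [hdet, sqrt_sq_eq_abs, inv_mul_eq_div]

end GaussianIntegrals

section LaplaceMethod

variable {E : Type*} [NormedAddCommGroup E] [NormedSpace ℝ E] {φ : E → ℝ} {S : Set E} {c : ℝ}

theorem tendsto_inv_smul_atTop_nhds_zero (v : E) :
    Tendsto (fun s : ℝ => s⁻¹ • v) atTop (𝓝 0) := by
  simpa using (tendsto_inv_atTop_zero (𝕜 := ℝ)).smul_const v

theorem sq_mul_apply_inv_smul_le (hφ : ∀ θ ∈ S, φ θ ≤ -c * ‖θ‖ ^ 2) {s : ℝ} (hs : s ≠ 0) {v : E}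
    (hv : s⁻¹ • v ∈ S) : s ^ 2 * φ (s⁻¹ • v) ≤ -c * ‖v‖ ^ 2 :=
  calc s ^ 2 * φ (s⁻¹ • v)
      ≤ s ^ 2 * (-c * ‖s⁻¹ • v‖ ^ 2) := mul_le_mul_of_nonneg_left (hφ _ hv) (sq_nonneg s)
    _ = -c * ‖v‖ ^ 2 := by
      rw [norm_smul, mul_pow, norm_inv, inv_pow, norm_eq_abs, sq_abs]
      field_simp

theorem le_neg_mul_norm_sq_of_tendsto_sq_mul_apply_inv_smul (hS : S ∈ 𝓝 0)
    (hφ : ∀ θ ∈ S, φ θ ≤ -c * ‖θ‖ ^ 2) {v : E} {q : ℝ}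
    (hlim : Tendsto (fun s : ℝ => s ^ 2 * φ (s⁻¹ • v)) atTop (𝓝 q)) : q ≤ -c * ‖v‖ ^ 2 := by
  refine le_of_tendsto hlim ?_
  filter_upwards [(tendsto_inv_smul_atTop_nhds_zero v).eventually_mem hS, eventually_ne_atTop 0]
    with s hv hs using sq_mul_apply_inv_smul_le hφ hs hv

theorem norm_indicator_exp_sq_mul_inv_smul_le {g : E → ℝ} {C : ℝ} (hC : 0 ≤ C)
    (hφ : ∀ θ ∈ S, φ θ ≤ -c * ‖θ‖ ^ 2) (hg : ∀ θ ∈ S, |g θ| ≤ C) {s : ℝ} (hs : s ≠ 0) (v : E) :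
    ‖S.indicator (fun θ => exp (s ^ 2 * φ θ) * g θ) (s⁻¹ • v)‖ ≤ exp (-c * ‖v‖ ^ 2) * C := by
  by_cases hv : s⁻¹ • v ∈ S
  · rw [Set.indicator_of_mem hv, norm_mul, norm_eq_abs, norm_eq_abs, abs_exp]
    exact mul_le_mul (exp_le_exp.2 (sq_mul_apply_inv_smul_le hφ hs hv)) (hg _ hv) (abs_nonneg _)
      (exp_nonneg _)
  · rw [Set.indicator_of_notMem hv, norm_zero]
    positivity

theorem tendsto_indicator_exp_sq_mul_inv_smul {g : E → ℝ} {v : E} {q : ℝ} (hS : S ∈ 𝓝 0)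
    (hφ : Tendsto (fun s : ℝ => s ^ 2 * φ (s⁻¹ • v)) atTop (𝓝 q)) (hg : ContinuousAt g 0) :
    Tendsto (fun s : ℝ => S.indicator (fun θ => exp (s ^ 2 * φ θ) * g θ) (s⁻¹ • v)) atTop
      (𝓝 (exp q * g 0)) := by
  refine (((continuous_exp.tendsto _).comp hφ).mul
    (hg.tendsto.comp (tendsto_inv_smul_atTop_nhds_zero v))).congr' ?_
  filter_upwards [(tendsto_inv_smul_atTop_nhds_zero v).eventually_mem hS] with s hs
  rw [Set.indicator_of_mem hs, Function.comp_apply, Function.comp_apply]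

variable [FiniteDimensional ℝ E] [MeasurableSpace E] [BorelSpace E] (μ : Measure E)
  [μ.IsAddHaarMeasure]

-- The dilation `θ = v / s` turns the integral into one over all of `E`, dominated by a Gaussian.
theorem tendsto_pow_finrank_mul_setIntegral_exp_sq_mul {g q : E → ℝ} {C : ℝ}
    (hφm : Measurable φ) (hgm : Measurable g) (hSm : MeasurableSet S) (hS : S ∈ 𝓝 0)
    (hc : 0 < c) (hφ : ∀ θ ∈ S, φ θ ≤ -c * ‖θ‖ ^ 2)
    (hq : ∀ v, Tendsto (fun s : ℝ => s ^ 2 * φ (s⁻¹ • v)) atTop (𝓝 (q v)))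
    (hgC : ∀ θ ∈ S, |g θ| ≤ C) (hg : ContinuousAt g 0) :
    Tendsto (fun s : ℝ => s ^ Module.finrank ℝ E * ∫ θ in S, exp (s ^ 2 * φ θ) * g θ ∂μ) atTop
      (𝓝 ((∫ v, exp (q v) ∂μ) * g 0)) := by
  have hC : 0 ≤ C := (abs_nonneg _).trans (hgC 0 (mem_of_mem_nhds hS))
  have hmeas (s : ℝ) : AEStronglyMeasurable
      (fun v => S.indicator (fun θ => exp (s ^ 2 * φ θ) * g θ) (s⁻¹ • v)) μ :=
    ((((hφm.const_mul _).exp.mul hgm).indicator hSm).comp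
      (measurable_const_smul s⁻¹)).aestronglyMeasurable
  have hlim := tendsto_integral_filter_of_dominated_convergence _ (.of_forall hmeas)
    ((eventually_ne_atTop 0).mono fun s hs =>
      ae_of_all _ (norm_indicator_exp_sq_mul_inv_smul_le hC hφ hgC hs))
    ((integrable_exp_neg_mul_norm_sq μ hc).mul_const C)
    (ae_of_all _ fun v => tendsto_indicator_exp_sq_mul_inv_smul hS (hq v) hg)
  rw [integral_mul_const] at hlim
  refine hlim.congr' ?_
  filter_upwards [eventually_ge_atTop 0] with s hs
  rw [Measure.integral_comp_inv_smul μ (S.indicator fun θ => exp (s ^ 2 * φ θ) * g θ),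
    integral_indicator hSm, abs_of_nonneg (pow_nonneg hs _), smul_eq_mul]

end LaplaceMethod

section LaplaceTransform

/-- The Laplace transform `b ↦ ∫₀^∞ e^{-bt} f(t) dt`, with value `0` where the integral diverges. -/
noncomputable def laplaceTransform (f : ℝ → ℝ) (b : ℝ) : ℝ :=
  ∫ t in Set.Ioi 0, exp (-b * t) * f t

/-- Absolute convergence of the integral defining `laplaceTransform f b`. -/
def LaplaceConvergent (f : ℝ → ℝ) (b : ℝ) : Prop :=
  IntegrableOn (fun t => exp (-b * t) * f t) (Set.Ioi 0)

variable {f : ℝ → ℝ} {b c σ : ℝ}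

theorem LaplaceConvergent.aestronglyMeasurable (hf : LaplaceConvergent f c) :
    AEStronglyMeasurable f (volume.restrict (Set.Ioi 0)) := by
  have hexp : Continuous fun t => exp (c * t) := by fun_prop
  refine (hexp.aestronglyMeasurable.mul (Integrable.aestronglyMeasurable hf)).congr
    (ae_of_all _ fun t => ?_)
  simp only [Pi.mul_apply, ← mul_assoc, ← exp_add, neg_mul, add_neg_cancel, exp_zero, one_mul]

theorem LaplaceConvergent.mono (hf : LaplaceConvergent f c) (hcb : c ≤ b) :
    LaplaceConvergent f b := by
  refine Integrable.mono hf
    ((by fun_prop : Continuous fun t => exp (-b * t)).aestronglyMeasurable.mul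
      hf.aestronglyMeasurable) ?_
  filter_upwards [ae_restrict_mem measurableSet_Ioi] with t ht
  have hbt := mul_le_mul_of_nonneg_right hcb (le_of_lt ht)
  simp only [norm_mul, norm_eq_abs, abs_exp]
  exact mul_le_mul_of_nonneg_right (exp_le_exp.2 (by linarith)) (abs_nonneg _)

theorem LaplaceConvergent.comp_mul_left {a : ℝ} (hf : LaplaceConvergent f b) (ha : 0 < a) :
    LaplaceConvergent (fun t => f (a * t)) (a * b) := by
  have h := (integrableOn_Ioi_comp_mul_left_iff (fun t => exp (-b * t) * f t) 0 ha).2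
    (by rwa [mul_zero])
  refine Integrable.congr h (ae_of_all _ fun t => ?_)
  ring_nf

theorem LaplaceConvergent.indicator {s : Set ℝ} (hf : LaplaceConvergent f b)
    (hs : MeasurableSet s) : LaplaceConvergent (s.indicator f) b :=
  (Integrable.indicator hf hs).congr
    (ae_of_all _ fun _ => Set.indicator_mul_right s (fun t => exp (-b * t)) f)

theorem laplaceTransform_indicator_add_indicator_compl {s : Set ℝ} (hf : LaplaceConvergent f b)
    (hs : MeasurableSet s) :
    laplaceTransform (s.indicator f) b + laplaceTransform (sᶜ.indicator f) b =
      laplaceTransform f b := by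
  simp only [laplaceTransform]
  rw [← integral_add (hf.indicator hs) (hf.indicator hs.compl)]
  simp only [← mul_add, ← Pi.add_apply (s.indicator f), Set.indicator_self_add_compl]

theorem LaplaceConvergent.id_mul (hf : LaplaceConvergent f c) (hcb : c < b) :
    LaplaceConvergent (fun t => t * f t) b := by
  have hcont : Continuous fun t => t * exp (-((b - c) * t)) := by fun_prop
  have hsub : 0 < b - c := sub_pos.2 hcb
  refine (Integrable.bdd_mul (c := exp (-1) / (b - c)) hf hcont.aestronglyMeasurable ?_).congr
    (ae_of_all _ fun t => ?_)
  · filter_upwards [ae_restrict_mem measurableSet_Ioi] with t ht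
    have ht : 0 < t := ht
    rw [norm_of_nonneg (by positivity), le_div_iff₀ hsub]
    linarith [mul_exp_neg_le_exp_neg_one ((b - c) * t)]
  · have hexp : exp (-b * t) = exp (-((b - c) * t)) * exp (-c * t) := by
      rw [← exp_add]
      ring_nf
    simp only [hexp]
    ring

theorem LaplaceConvergent.pow_mul (hf : ∀ b > σ, LaplaceConvergent f b) (n : ℕ) :
    ∀ b > σ, LaplaceConvergent (fun t => t ^ n * f t) b := by
  induction n with
  | zero => simpa only [pow_zero, one_mul] using hf
  | succ n ih =>
    intro b hb
    obtain ⟨c, hσc, hcb⟩ := exists_between hb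
    simpa only [pow_succ', mul_assoc] using (ih c hσc).id_mul hcb

theorem hasDerivAt_laplaceTransform (hf : LaplaceConvergent f c) (hcb : c < b) :
    HasDerivAt (laplaceTransform f) (-laplaceTransform (fun t => t * f t) b) b := by
  obtain ⟨c', hcc', hc'b⟩ := exists_between hcb
  have hnhds : Set.Ioi c' ∈ 𝓝 b := Ioi_mem_nhds hc'b
  have hderiv (t x : ℝ) :
      HasDerivAt (fun x => exp (-x * t) * f t) (-(exp (-x * t) * (t * f t))) x := by
    refine ((((hasDerivAt_neg x).mul_const t).exp).mul_const (f t)).congr_deriv ?_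
    ring
  rw [laplaceTransform, ← integral_neg]
  have hmeas : ∀ᶠ x in 𝓝 b, AEStronglyMeasurable (fun t => exp (-x * t) * f t)
      (volume.restrict (Set.Ioi 0)) := by
    filter_upwards [hnhds] with x hx using (hf.mono (hcc'.trans hx).le : Integrable _ _).1
  refine (hasDerivAt_integral_of_dominated_loc_of_deriv_le hnhds hmeas (hf.mono hcb.le)
    (Integrable.neg (hf.id_mul hcb)).1 ?_ (Integrable.norm (hf.id_mul hcc'))
    (ae_of_all _ fun t x _ => hderiv t x)).2
  · filter_upwards [ae_restrict_mem measurableSet_Ioi] with t ht x hx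
    have hxt := mul_le_mul_of_nonneg_right (le_of_lt hx) (Set.mem_Ioi.1 ht).le
    simp only [norm_neg, norm_mul, norm_eq_abs, abs_exp]
    exact mul_le_mul_of_nonneg_right (exp_le_exp.2 (by linarith)) (by positivity)

theorem iteratedDeriv_laplaceTransform (hf : ∀ b > σ, LaplaceConvergent f b) (n : ℕ)
    (hb : σ < b) :
    iteratedDeriv n (laplaceTransform f) b =
      (-1) ^ n * laplaceTransform (fun t => t ^ n * f t) b := by
  induction n generalizing b with
  | zero => simp only [iteratedDeriv_zero, pow_zero, one_mul]
  | succ n ih =>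
    have heq : iteratedDeriv n (laplaceTransform f) =ᶠ[𝓝 b]
        fun b => (-1) ^ n * laplaceTransform (fun t => t ^ n * f t) b := by
      filter_upwards [Ioi_mem_nhds hb] with x hx using ih hx
    obtain ⟨c, hσc, hcb⟩ := exists_between hb
    have hderiv := hasDerivAt_laplaceTransform (LaplaceConvergent.pow_mul hf n c hσc) hcb
    rw [iteratedDeriv_succ, heq.deriv_eq, (hderiv.const_mul _).deriv]
    simp only [pow_succ', neg_mul, one_mul, mul_neg, mul_assoc]

end LaplaceTransform

section Abelian

variable {f : ℝ → ℝ} {b c r C T : ℝ}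

theorem rpow_mul_laplaceTransform_eq (f : ℝ → ℝ) (r : ℝ) (hb : 0 < b) :
    b ^ r * laplaceTransform f b =
      ∫ u in Set.Ioi 0, exp (-u) * u ^ (r - 1) * ((b⁻¹ * u) ^ (1 - r) * f (b⁻¹ * u)) := by
  have hscale := integral_comp_mul_left_Ioi (fun t => exp (-b * t) * f t) 0 (inv_pos.2 hb)
  rw [mul_zero, inv_inv, smul_eq_mul] at hscale
  have hr : b ^ r = b ^ (r - 1) * b := by rw [← rpow_add_one hb.ne', sub_add_cancel]
  rw [laplaceTransform, hr, mul_assoc, ← hscale, ← integral_const_mul]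
  refine setIntegral_congr_fun measurableSet_Ioi fun u hu => ?_
  have hu : 0 < u := hu
  have hexp : -b * (b⁻¹ * u) = -u := by field_simp
  have hpow : u ^ (r - 1) * (b⁻¹ * u) ^ (1 - r) = b ^ (r - 1) := by
    rw [mul_rpow (inv_nonneg.2 hb.le) hu.le, mul_left_comm, ← rpow_add hu, inv_rpow hb.le,
      ← rpow_neg hb.le, sub_add_sub_cancel, sub_self, rpow_zero, mul_one, neg_sub]
  simp only [hexp, ← hpow]
  ring

theorem tendsto_rpow_mul_laplaceTransform_of_abs_le (hr : 0 < r)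
    (hf : ∀ b > 0, LaplaceConvergent f b) (hC : ∀ t > 0, |t ^ (1 - r) * f t| ≤ C)
    (hlim : Tendsto (fun t => t ^ (1 - r) * f t) atTop (𝓝 c)) :
    Tendsto (fun b => b ^ r * laplaceTransform f b) (𝓝[>] 0) (𝓝 (c * Gamma r)) := by
  have hmeas (b : ℝ) (hb : 0 < b) : AEStronglyMeasurable
      (fun u => exp (-u) * u ^ (r - 1) * ((b⁻¹ * u) ^ (1 - r) * f (b⁻¹ * u)))
      (volume.restrict (Set.Ioi 0)) :=
    AEStronglyMeasurable.mul (by fun_prop) (.mul (Measurable.aestronglyMeasurable (by fun_prop))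
      ((hf b hb).comp_mul_left (inv_pos.2 hb)).aestronglyMeasurable)
  have hlim' : Tendsto (fun b : ℝ => ∫ u in Set.Ioi 0,
      exp (-u) * u ^ (r - 1) * ((b⁻¹ * u) ^ (1 - r) * f (b⁻¹ * u))) (𝓝[>] 0)
      (𝓝 (∫ u in Set.Ioi 0, exp (-u) * u ^ (r - 1) * c)) := by
    refine tendsto_integral_filter_of_dominated_convergence _
      (eventually_mem_nhdsWithin.mono hmeas) ?_ ((GammaIntegral_convergent hr).mul_const C) ?_
    · filter_upwards [self_mem_nhdsWithin] with b hb
      filter_upwards [ae_restrict_mem measurableSet_Ioi] with u hu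
      have hb : 0 < b := hb
      have hu : 0 < u := hu
      rw [norm_mul, norm_of_nonneg (by positivity)]
      exact mul_le_mul_of_nonneg_left (hC _ (by positivity)) (by positivity)
    · filter_upwards [ae_restrict_mem measurableSet_Ioi] with u hu
      exact (hlim.comp (tendsto_inv_nhdsGT_zero.atTop_mul_const hu)).const_mul _
  rw [integral_mul_const, ← Gamma_eq_integral hr, mul_comm] at hlim'
  refine hlim'.congr' ?_
  filter_upwards [self_mem_nhdsWithin] with b hb using (rpow_mul_laplaceTransform_eq f r hb).symm

theorem tendsto_rpow_mul_laplaceTransform_indicator_Iic (hr : 0 < r) (hf : LaplaceConvergent f 1)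
    (T : ℝ) :
    Tendsto (fun b => b ^ r * laplaceTransform ((Set.Iic T).indicator f) b) (𝓝[>] 0) (𝓝 0) := by
  have hbound : ∀ b > 0, |laplaceTransform ((Set.Iic T).indicator f) b| ≤
      ∫ t in Set.Ioi 0, exp |T| * ‖exp (-1 * t) * f t‖ := by
    intro b hb
    rw [laplaceTransform, ← norm_eq_abs]
    refine norm_integral_le_of_norm_le ((Integrable.norm hf).const_mul _) ?_
    filter_upwards [ae_restrict_mem measurableSet_Ioi] with t ht
    by_cases htT : t ∈ Set.Iic T
    · simp only [Set.indicator_of_mem htT, norm_mul, norm_eq_abs, abs_exp, ← mul_assoc, ← exp_add]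
      gcongr
      linarith [mul_pos hb ht, (Set.mem_Iic.1 htT).trans (le_abs_self T)]
    · rw [Set.indicator_of_notMem htT, mul_zero, norm_zero]
      positivity
  have hpow : Tendsto (fun b : ℝ => b ^ r * ∫ t in Set.Ioi 0, exp |T| * ‖exp (-1 * t) * f t‖)
      (𝓝[>] 0) (𝓝 0) := by
    have h := (continuousAt_rpow_const 0 r (.inr hr.le)).tendsto.mono_left
      (nhdsWithin_le_nhds (s := Set.Ioi 0))
    simpa only [zero_rpow hr.ne', zero_mul] using h.mul_const _
  refine squeeze_zero_norm' ?_ hpow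
  filter_upwards [self_mem_nhdsWithin] with b hb
  rw [norm_mul, norm_of_nonneg (rpow_nonneg (le_of_lt hb) r)]
  exact mul_le_mul_of_nonneg_left (hbound b hb) (rpow_nonneg (le_of_lt hb) r)

-- Only large `t` matter, and there `t ^ (1 - r) * f t` is bounded.
theorem tendsto_rpow_mul_laplaceTransform (hr : 0 < r) (hf : ∀ b > 0, LaplaceConvergent f b)
    (hlim : Tendsto (fun t => t ^ (1 - r) * f t) atTop (𝓝 c)) :
    Tendsto (fun b => b ^ r * laplaceTransform f b) (𝓝[>] 0) (𝓝 (c * Gamma r)) := by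
  obtain ⟨T, hT⟩ := eventually_atTop.1 (hlim.abs.eventually_le_const (lt_add_one |c|))
  have hhead := tendsto_rpow_mul_laplaceTransform_indicator_Iic hr (hf 1 one_pos) T
  have hbound : ∀ t > 0, |t ^ (1 - r) * (Set.Iic T)ᶜ.indicator f t| ≤ |c| + 1 := by
    intro t _
    by_cases htT : t ∈ Set.Iic T
    · rw [Set.indicator_of_notMem (Set.notMem_compl_iff.2 htT), mul_zero, abs_zero]
      positivity
    · rw [Set.indicator_of_mem htT]
      exact hT t (not_le.1 htT).le
  have hlim' : Tendsto (fun t => t ^ (1 - r) * (Set.Iic T)ᶜ.indicator f t) atTop (𝓝 c) := by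
    refine hlim.congr' ?_
    filter_upwards [eventually_gt_atTop T] with t ht
    rw [Set.indicator_of_mem (not_le.2 ht)]
  have htail := tendsto_rpow_mul_laplaceTransform_of_abs_le hr
    (fun b hb => (hf b hb).indicator measurableSet_Iic.compl) hbound hlim'
  have hsum := hhead.add htail
  rw [zero_add] at hsum
  refine hsum.congr' ?_
  filter_upwards [self_mem_nhdsWithin] with b hb
  rw [← mul_add, laplaceTransform_indicator_add_indicator_compl (hf b hb) measurableSet_Iic]

end Abelian

section TailIntegral

/-- The tail `s ↦ ∫ₛ^∞ p(t) dt`, with value `0` where the integral diverges. -/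
noncomputable def tailIntegral (p : ℝ → ℝ) (s : ℝ) : ℝ := ∫ t in Set.Ioi s, p t

variable {p : ℝ → ℝ} {b β γ : ℝ}

theorem tailIntegral_eq_sub_intervalIntegral (hp : Continuous p) (hint : IntegrableOn p (Set.Ioi 0))
    (s : ℝ) : tailIntegral p s = tailIntegral p 0 - ∫ t in (0)..s, p t := by
  have hs : IntegrableOn p (Set.Ioi s) :=
    ((hp.integrableOn_Ioc (a := s) (b := 0)).union hint).mono_set Set.Ioi_subset_Ioc_union_Ioi
  rw [tailIntegral, tailIntegral, ← intervalIntegral.integral_interval_add_Ioi hint hs,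
    add_sub_cancel_left]

theorem hasDerivAt_tailIntegral (hp : Continuous p) (hint : IntegrableOn p (Set.Ioi 0)) (s : ℝ) :
    HasDerivAt (tailIntegral p) (-p s) s := by
  rw [funext (tailIntegral_eq_sub_intervalIntegral hp hint)]
  exact (hp.integral_hasStrictDerivAt 0 s).hasDerivAt.const_sub _

theorem continuous_tailIntegral (hp : Continuous p) (hint : IntegrableOn p (Set.Ioi 0)) :
    Continuous (tailIntegral p) :=
  continuous_iff_continuousAt.2 fun s => (hasDerivAt_tailIntegral hp hint s).continuousAt

theorem tendsto_tailIntegral_atTop (p : ℝ → ℝ) : Tendsto (tailIntegral p) atTop (𝓝 0) :=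
  tendsto_integral_Ioi_zero tendsto_id

theorem abs_tailIntegral_le (hint : IntegrableOn p (Set.Ioi 0)) {s : ℝ} (hs : 0 ≤ s) :
    |tailIntegral p s| ≤ ∫ t in Set.Ioi 0, |p t| :=
  abs_integral_le_integral_abs.trans
    (setIntegral_mono_set hint.abs (ae_of_all _ fun _ => abs_nonneg _)
      (Set.Ioi_subset_Ioi hs).eventuallyLE)

theorem laplaceConvergent_tailIntegral (hp : Continuous p) (hint : IntegrableOn p (Set.Ioi 0))
    (hb : 0 < b) : LaplaceConvergent (tailIntegral p) b := by
  refine (exp_neg_integrableOn_Ioi 0 hb).mul_bdd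
    (continuous_tailIntegral hp hint).aestronglyMeasurable ?_ (c := ∫ t in Set.Ioi 0, |p t|)
  filter_upwards [ae_restrict_mem measurableSet_Ioi] with s hs
    using abs_tailIntegral_le hint (le_of_lt hs)

-- Integrate `p` by parts against `1 - e^{-bt}`; the boundary terms vanish at `0` and at `∞`.
theorem laplaceTransform_zero_sub (hp : Continuous p) (hint : IntegrableOn p (Set.Ioi 0))
    (hb : 0 < b) :
    laplaceTransform p 0 - laplaceTransform p b = b * laplaceTransform (tailIntegral p) b := by
  have hp0 : LaplaceConvergent p 0 := by
    simpa only [LaplaceConvergent, neg_zero, zero_mul, exp_zero, one_mul] using hint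
  have hsub : IntegrableOn ((fun t => 1 - exp (-b * t)) * fun t => -p t) (Set.Ioi 0) :=
    ((hp0.mono hb.le).sub hint).congr_fun
      (fun t _ => by simp only [Pi.sub_apply, Pi.mul_apply]; ring) measurableSet_Ioi
  have hq : IntegrableOn ((fun t => b * exp (-b * t)) * tailIntegral p) (Set.Ioi 0) := by
    simpa only [mul_assoc, IntegrableOn, Pi.mul_def] using
      (laplaceConvergent_tailIntegral hp hint hb).const_mul b
  have hu (t : ℝ) : HasDerivAt (fun t => 1 - exp (-b * t)) (b * exp (-b * t)) t := by
    refine (((hasDerivAt_id t).const_mul (-b)).exp.const_sub 1).congr_deriv ?_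
    simp only [id]
    ring
  have hzero : Tendsto ((fun t => 1 - exp (-b * t)) * tailIntegral p) (𝓝[>] 0) (𝓝 0) := by
    have h := (hu 0).continuousAt.mul (continuous_tailIntegral hp hint).continuousAt
    simpa using! h.tendsto.mono_left nhdsWithin_le_nhds
  have htop : Tendsto ((fun t => 1 - exp (-b * t)) * tailIntegral p) atTop (𝓝 0) := by
    have hexp : Tendsto (fun t => exp (-b * t)) atTop (𝓝 0) :=
      tendsto_exp_atBot.comp (tendsto_id.const_mul_atTop_of_neg (neg_neg_of_pos hb))
    simpa using! (hexp.const_sub 1).mul (tendsto_tailIntegral_atTop p)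
  calc laplaceTransform p 0 - laplaceTransform p b
      = -∫ t in Set.Ioi 0, (1 - exp (-b * t)) * -p t := by
        rw [laplaceTransform, laplaceTransform, ← integral_sub hp0 (hp0.mono hb.le), ← integral_neg]
        congr with t
        rw [neg_zero, zero_mul, exp_zero]
        ring
    _ = ∫ t in Set.Ioi 0, b * exp (-b * t) * tailIntegral p t := by
        rw [integral_Ioi_mul_deriv_eq_deriv_mul (fun t _ => hu t)
          (fun t _ => hasDerivAt_tailIntegral hp hint t) hsub hq hzero htop]
        ring
    _ = b * laplaceTransform (tailIntegral p) b := by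
        simp only [laplaceTransform, mul_assoc, integral_const_mul]

theorem integrableOn_Ioi_of_tendsto_rpow_mul (hp : Continuous p) (hβ : 1 < β)
    (hlim : Tendsto (fun t => t ^ β * p t) atTop (𝓝 γ)) (s : ℝ) : IntegrableOn p (Set.Ioi s) := by
  have hO : p =O[atTop] fun t => t ^ (-β) := by
    refine isBigO_of_div_tendsto_nhds ?_ γ (hlim.congr' ?_)
    · filter_upwards [eventually_gt_atTop 0] with t ht h
      exact absurd h (rpow_pos_of_pos ht _).ne'
    · filter_upwards [eventually_gt_atTop 0] with t ht
      rw [Pi.div_apply, rpow_neg ht.le, div_inv_eq_mul, mul_comm]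
  exact ((hp.locallyIntegrable.locallyIntegrableOn _).integrableOn_of_isBigO_atTop hO
    (integrableAtFilter_rpow_atTop_iff.2 (neg_lt_neg hβ))).mono_set Set.Ioi_subset_Ici_self

theorem tendsto_rpow_mul_tailIntegral (hp : Continuous p) (hβ : 1 < β)
    (hlim : Tendsto (fun t => t ^ β * p t) atTop (𝓝 γ)) :
    Tendsto (fun s => s ^ (β - 1) * tailIntegral p s) atTop (𝓝 (γ / (β - 1))) := by
  have hint := integrableOn_Ioi_of_tendsto_rpow_mul hp hβ hlim 0
  have hβ' : 0 < β - 1 := sub_pos.2 hβ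
  have hdiv : Tendsto (fun s => -p s / (-(β - 1) * s ^ (-(β - 1) - 1))) atTop
      (𝓝 (γ / (β - 1))) := by
    refine (hlim.div_const (β - 1)).congr' ?_
    filter_upwards [eventually_gt_atTop 0] with s hs
    rw [show -(β - 1) - 1 = -β by ring, rpow_neg hs.le]
    have := (rpow_pos_of_pos hs β).ne'
    field_simp
  have hquot := HasDerivAt.lhopital_zero_atTop
    (.of_forall (hasDerivAt_tailIntegral hp hint))
    ((eventually_ne_atTop 0).mono fun s hs => hasDerivAt_rpow_const (.inl hs))
    ((eventually_gt_atTop 0).mono fun s hs =>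
      mul_ne_zero (neg_ne_zero.2 hβ'.ne') (rpow_pos_of_pos hs _).ne')
    (tendsto_tailIntegral_atTop p) (tendsto_rpow_neg_atTop hβ') hdiv
  refine hquot.congr' ?_
  filter_upwards [eventually_ge_atTop 0] with s hs
  rw [rpow_neg hs, div_inv_eq_mul, mul_comm]

theorem tendsto_rpow_mul_iteratedDeriv_laplaceTransform_zero_sub_div (hp : Continuous p)
    (hβ : 1 < β) {n : ℕ} (hn : β < n + 2)
    (hlim : Tendsto (fun t => t ^ β * p t) atTop (𝓝 γ)) :
    Tendsto (fun b => b ^ (n + 2 - β) * ((-1) ^ n * iteratedDeriv n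
      (fun x => (laplaceTransform p 0 - laplaceTransform p x) / x) b)) (𝓝[>] 0)
      (𝓝 (γ / (β - 1) * Gamma (n + 2 - β))) := by
  have hint := integrableOn_Ioi_of_tendsto_rpow_mul hp hβ hlim 0
  have hconv : ∀ b > 0, LaplaceConvergent (tailIntegral p) b := fun b hb =>
    laplaceConvergent_tailIntegral hp hint hb
  have htail : Tendsto (fun s => s ^ (1 - (n + 2 - β)) * (s ^ n * tailIntegral p s)) atTop
      (𝓝 (γ / (β - 1))) := by
    refine (tendsto_rpow_mul_tailIntegral hp hβ hlim).congr' ?_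
    filter_upwards [eventually_gt_atTop 0] with s hs
    rw [← mul_assoc, ← rpow_add_natCast hs.ne']
    ring_nf
  refine (tendsto_rpow_mul_laplaceTransform (by linarith)
    (LaplaceConvergent.pow_mul hconv n) htail).congr' ?_
  filter_upwards [self_mem_nhdsWithin] with b hb
  have hquot : (fun x => (laplaceTransform p 0 - laplaceTransform p x) / x) =ᶠ[𝓝 b]
      laplaceTransform (tailIntegral p) := by
    filter_upwards [Ioi_mem_nhds hb] with x hx
    rw [laplaceTransform_zero_sub hp hint hx, mul_div_cancel_left₀ _ (ne_of_gt hx)]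
  rw [hquot.iteratedDeriv_eq, iteratedDeriv_laplaceTransform hconv n hb, ← mul_assoc ((-1) ^ n),
    ← mul_pow, neg_one_mul, neg_neg, one_pow, one_mul]

end TailIntegral

section Symbol

variable {d : ℕ} {a : (Fin d → ℤ) → ℝ}

/-- The cube `[-π, π]^d`, the domain of integration in `ptrans`. -/
abbrev fourierCube (d : ℕ) : Set (Fin d → ℝ) := Set.Icc (fun _ => -π) (fun _ => π)

theorem fourierCube_mem_nhds_zero (d : ℕ) : fourierCube d ∈ 𝓝 0 := by
  rw [fourierCube, ← Set.pi_univ_Icc]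
  exact set_pi_mem_nhds Set.finite_univ fun _ _ => Icc_mem_nhds (neg_lt_zero.2 pi_pos) pi_pos

theorem summable_mul_cos_sum (ha : Summable a) (θ : Fin d → ℝ) :
    Summable fun z : Fin d → ℤ => a z * cos (∑ i, (z i : ℝ) * θ i) :=
  ha.abs.of_norm_bounded fun z => by
    rw [norm_mul]
    exact mul_le_of_le_one_right (norm_nonneg _) (abs_cos_le_one _)

theorem continuous_phiSymb (ha : Summable a) : Continuous (phiSymb d a) := by
  refine continuous_tsum (fun z => by fun_prop) ha.abs fun z θ => ?_
  rw [norm_mul]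
  exact mul_le_of_le_one_right (norm_nonneg _) (abs_cos_le_one _)

theorem hasSum_neg_phiSymb (hsum : HasSum a 0) (θ : Fin d → ℝ) :
    HasSum (fun z => 2 * a z * sin ((∑ i, (z i : ℝ) * θ i) / 2) ^ 2) (-phiSymb d a θ) := by
  have h := hsum.sub (summable_mul_cos_sum hsum.summable θ).hasSum
  rw [zero_sub] at h
  refine h.congr_fun fun z => ?_
  rw [sin_sq_eq_half_sub, mul_div_cancel₀ _ two_ne_zero]
  ring

theorem two_mul_mul_sin_sq_nonneg (hpos : ∀ z, z ≠ 0 → 0 ≤ a z) (θ : Fin d → ℝ) (z : Fin d → ℤ) :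
    0 ≤ 2 * a z * sin ((∑ i, (z i : ℝ) * θ i) / 2) ^ 2 := by
  rcases eq_or_ne z 0 with rfl | hz
  · simp
  · have := hpos z hz
    positivity

theorem phiSymb_nonpos (hpos : ∀ z, z ≠ 0 → 0 ≤ a z) (hsum : HasSum a 0) (θ : Fin d → ℝ) :
    phiSymb d a θ ≤ 0 :=
  neg_nonneg.1 ((hasSum_neg_phiSymb hsum θ).nonneg (two_mul_mul_sin_sq_nonneg hpos θ))

theorem sin_add_sq_le (x y : ℝ) : sin (x + y) ^ 2 ≤ 2 * (sin x ^ 2 + sin y ^ 2) := by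
  have hx : (sin x * cos y) ^ 2 ≤ sin x ^ 2 := by
    rw [mul_pow]
    exact mul_le_of_le_one_right (sq_nonneg _) (cos_sq_le_one y)
  have hy : (cos x * sin y) ^ 2 ≤ sin y ^ 2 := by
    rw [mul_pow]
    exact mul_le_of_le_one_left (sq_nonneg _) (cos_sq_le_one x)
  rw [sin_add]
  exact add_sq_le.trans (by gcongr)

theorem exists_sin_sq_le_mul_neg_phiSymb (hpos : ∀ z, z ≠ 0 → 0 ≤ a z) (hsum : HasSum a 0)
    {z : Fin d → ℤ} (hz : z ∈ AddSubgroup.closure {z | 0 < a z}) :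
    ∃ C, 0 ≤ C ∧ ∀ θ : Fin d → ℝ,
      sin ((∑ i, (z i : ℝ) * θ i) / 2) ^ 2 ≤ C * -phiSymb d a θ := by
  induction hz using AddSubgroup.closure_induction with
  | mem z hz =>
    have hz : 0 < a z := hz
    refine ⟨(2 * a z)⁻¹, by positivity, fun θ => ?_⟩
    rw [le_inv_mul_iff₀ (by positivity)]
    exact le_hasSum (hasSum_neg_phiSymb hsum θ) z fun w _ => two_mul_mul_sin_sq_nonneg hpos θ w
  | zero => exact ⟨0, le_rfl, fun θ => by simp⟩
  | add x y _ _ hx hy =>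
    obtain ⟨C, hC, hx⟩ := hx
    obtain ⟨D, hD, hy⟩ := hy
    refine ⟨2 * (C + D), by positivity, fun θ => ?_⟩
    have hxy : (∑ i, ((x + y) i : ℝ) * θ i) / 2 =
        (∑ i, (x i : ℝ) * θ i) / 2 + (∑ i, (y i : ℝ) * θ i) / 2 := by
      simp [add_mul, Finset.sum_add_distrib, add_div]
    rw [hxy]
    linarith [sin_add_sq_le ((∑ i, (x i : ℝ) * θ i) / 2) ((∑ i, (y i : ℝ) * θ i) / 2), hx θ, hy θ]
  | neg x _ hx =>
    obtain ⟨C, hC, hx⟩ := hx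
    refine ⟨C, hC, fun θ => ?_⟩
    have hneg : (∑ i, ((-x) i : ℝ) * θ i) / 2 = -((∑ i, (x i : ℝ) * θ i) / 2) := by
      simp [neg_div]
    rw [hneg, sin_neg, neg_sq]
    exact hx θ

theorem sq_le_pi_sq_mul_sin_half_sq {x : ℝ} (hx : |x| ≤ π) : x ^ 2 ≤ π ^ 2 * sin (x / 2) ^ 2 := by
  have hx2 : |x / 2| ≤ π / 2 := by
    rw [abs_div, abs_two]
    gcongr
  have h := mul_abs_le_abs_sin hx2
  rw [abs_div, abs_two, div_mul_div_cancel₀' two_ne_zero, div_le_iff₀' pi_pos] at h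
  rw [← mul_pow, sq_le_sq, abs_mul, abs_of_pos pi_pos]
  exact h

theorem exists_phiSymb_le_neg_mul_norm_sq (hpos : ∀ z, z ≠ 0 → 0 ≤ a z) (hsum : HasSum a 0)
    (hirr : AddSubgroup.closure {z | 0 < a z} = ⊤) :
    ∃ c > 0, ∀ θ ∈ fourierCube d, phiSymb d a θ ≤ -c * ‖θ‖ ^ 2 := by
  choose C hC hsin using fun j : Fin d => exists_sin_sq_le_mul_neg_phiSymb hpos hsum
    (z := Pi.single j 1) (hirr ▸ AddSubgroup.mem_top _)
  have hS : 0 ≤ ∑ j, C j := Finset.sum_nonneg fun j _ => hC j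
  refine ⟨(π ^ 2 * (∑ j, C j + 1))⁻¹, by positivity, fun θ hθ => ?_⟩
  have hφ : 0 ≤ -phiSymb d a θ := neg_nonneg.2 (phiSymb_nonpos hpos hsum θ)
  have hcoord (j : Fin d) : θ j ^ 2 ≤ π ^ 2 * (∑ j, C j + 1) * -phiSymb d a θ := by
    have hj : ∑ i, ((Pi.single j 1 : Fin d → ℤ) i : ℝ) * θ i = θ j := by
      simp [Pi.single_apply]
    have hCj : C j ≤ ∑ j, C j + 1 :=
      (Finset.single_le_sum (fun j _ => hC j) (Finset.mem_univ j)).trans (le_add_of_nonneg_right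
        zero_le_one)
    calc θ j ^ 2 ≤ π ^ 2 * sin (θ j / 2) ^ 2 :=
          sq_le_pi_sq_mul_sin_half_sq (abs_le.2 ⟨hθ.1 j, hθ.2 j⟩)
      _ ≤ π ^ 2 * (C j * -phiSymb d a θ) := by
          gcongr
          simpa only [hj] using hsin j θ
      _ ≤ π ^ 2 * (∑ j, C j + 1) * -phiSymb d a θ := by
          rw [mul_assoc]
          gcongr
  have hnorm : ‖θ‖ ^ 2 ≤ π ^ 2 * (∑ j, C j + 1) * -phiSymb d a θ := by
    rw [← Real.le_sqrt (norm_nonneg _) (by positivity)]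
    refine (pi_norm_le_iff_of_nonneg (sqrt_nonneg _)).2 fun j => ?_
    exact abs_le_sqrt (hcoord j)
  rw [neg_mul, le_neg, inv_mul_le_iff₀ (by positivity)]
  exact hnorm

theorem tendsto_sq_mul_sin_div_sq (x : ℝ) :
    Tendsto (fun s : ℝ => s ^ 2 * sin (x / s) ^ 2) atTop (𝓝 (x ^ 2)) := by
  have h0 : Tendsto (fun s : ℝ => x / s) atTop (𝓝 0) := tendsto_id.const_div_atTop x
  have h := (((continuous_sinc.tendsto 0).comp h0).const_mul x).pow 2
  rw [sinc_zero, mul_one] at h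
  refine h.congr' ?_
  filter_upwards [eventually_ne_atTop 0] with s hs
  rcases eq_or_ne x 0 with rfl | hx
  · simp
  · rw [Function.comp_apply, sinc_of_ne_zero (div_ne_zero hx hs)]
    field_simp

theorem sq_mul_sin_div_sq_le (x s : ℝ) : s ^ 2 * sin (x / s) ^ 2 ≤ x ^ 2 := by
  rcases eq_or_ne s 0 with rfl | hs
  · simpa using sq_nonneg x
  · calc s ^ 2 * sin (x / s) ^ 2 ≤ s ^ 2 * (x / s) ^ 2 := by
          gcongr s ^ 2 * ?_
          exact sin_sq_le_sq
      _ = x ^ 2 := by field_simp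

section Hessian

open scoped Matrix

theorem sum_mul_inv_smul_div_two (z : Fin d → ℤ) (v : Fin d → ℝ) (s : ℝ) :
    (∑ i, (z i : ℝ) * (s⁻¹ • v) i) / 2 = (∑ i, (z i : ℝ) * v i) / 2 / s := by
  simp only [Pi.smul_apply, smul_eq_mul, mul_left_comm _ s⁻¹, ← Finset.mul_sum]
  ring

theorem tendsto_sq_mul_phiSymb (hpos : ∀ z, z ≠ 0 → 0 ≤ a z) (hsum : HasSum a 0)
    (hvar : Summable fun z : Fin d → ℤ => (∑ i, (z i : ℝ) ^ 2) * a z) (v : Fin d → ℝ) :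
    Tendsto (fun s : ℝ => s ^ 2 * phiSymb d a (s⁻¹ • v)) atTop
      (𝓝 (-(∑' z : Fin d → ℤ, a z * (∑ i, (z i : ℝ) * v i) ^ 2) / 2)) := by
  have hlim : Tendsto (fun s : ℝ => ∑' z : Fin d → ℤ,
      2 * a z * (s ^ 2 * sin ((∑ i, (z i : ℝ) * v i) / 2 / s) ^ 2)) atTop
      (𝓝 (∑' z : Fin d → ℤ, 2 * a z * ((∑ i, (z i : ℝ) * v i) / 2) ^ 2)) := by
    refine tendsto_tsum_of_dominated_convergence (hvar.mul_right ((∑ i, v i ^ 2) / 2))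
      (fun z => (tendsto_sq_mul_sin_div_sq _).const_mul _) (.of_forall fun s z => ?_)
    rcases eq_or_ne z 0 with rfl | hz
    · simp
    · have haz := hpos z hz
      rw [norm_of_nonneg (by positivity)]
      calc 2 * a z * (s ^ 2 * sin ((∑ i, (z i : ℝ) * v i) / 2 / s) ^ 2)
          ≤ 2 * a z * ((∑ i, (z i : ℝ) * v i) / 2) ^ 2 := by
            gcongr
            exact sq_mul_sin_div_sq_le _ s
        _ = a z / 2 * (∑ i, (z i : ℝ) * v i) ^ 2 := by ring
        _ ≤ a z / 2 * ((∑ i, (z i : ℝ) ^ 2) * ∑ i, v i ^ 2) := by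
            gcongr
            exact Finset.sum_mul_sq_le_sq_mul_sq _ _ _
        _ = (∑ i, (z i : ℝ) ^ 2) * a z * ((∑ i, v i ^ 2) / 2) := by ring
  have hvalue : -(∑' z : Fin d → ℤ, a z * (∑ i, (z i : ℝ) * v i) ^ 2) / 2 =
      -∑' z : Fin d → ℤ, 2 * a z * ((∑ i, (z i : ℝ) * v i) / 2) ^ 2 := by
    rw [neg_div, ← tsum_div_const]
    ring_nf
  rw [hvalue]
  refine hlim.neg.congr fun s => ?_
  have hs := (hasSum_neg_phiSymb hsum (s⁻¹ • v)).tsum_eq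
  simp only [sum_mul_inv_smul_div_two] at hs
  rw [← neg_neg (phiSymb d a (s⁻¹ • v)), ← hs, mul_neg, ← tsum_mul_left]
  simp only [mul_left_comm]

theorem summable_mul_intCast_mul_intCast (hpos : ∀ z, z ≠ 0 → 0 ≤ a z)
    (hvar : Summable fun z : Fin d → ℤ => (∑ i, (z i : ℝ) ^ 2) * a z) (i j : Fin d) :
    Summable fun z : Fin d → ℤ => a z * (z i : ℝ) * (z j : ℝ) := by
  refine Summable.of_norm_bounded hvar fun z => ?_
  rcases eq_or_ne z 0 with rfl | hz
  · simp
  · have hcoord (k : Fin d) : |(z k : ℝ)| ≤ √(∑ i, (z i : ℝ) ^ 2) :=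
      abs_le_sqrt (Finset.single_le_sum (f := fun i => (z i : ℝ) ^ 2)
        (fun i _ => sq_nonneg _) (Finset.mem_univ k))
    rw [norm_eq_abs, mul_assoc, abs_mul, abs_mul, abs_of_nonneg (hpos z hz), mul_comm]
    refine mul_le_mul_of_nonneg_right ?_ (hpos z hz)
    exact (mul_le_mul (hcoord i) (hcoord j) (abs_nonneg _) (sqrt_nonneg _)).trans_eq
      (mul_self_sqrt (Finset.sum_nonneg fun i _ => sq_nonneg _))

theorem dotProduct_neg_hessPhi_mulVec (hpos : ∀ z, z ≠ 0 → 0 ≤ a z)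
    (hvar : Summable fun z : Fin d → ℤ => (∑ i, (z i : ℝ) ^ 2) * a z) (v : Fin d → ℝ) :
    v ⬝ᵥ (-hessPhi d a) *ᵥ v = ∑' z : Fin d → ℤ, a z * (∑ i, (z i : ℝ) * v i) ^ 2 := by
  have hdouble := hasSum_sum (s := Finset.univ) fun i _ => hasSum_sum (s := Finset.univ) fun j _ =>
    ((summable_mul_intCast_mul_intCast hpos hvar i j).hasSum.mul_left (v i)).mul_right (v j)
  have hsq (z : Fin d → ℤ) : a z * (∑ i, (z i : ℝ) * v i) ^ 2 =
      ∑ i, ∑ j, v i * (a z * (z i : ℝ) * (z j : ℝ)) * v j := by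
    rw [sq, Finset.sum_mul_sum, Finset.mul_sum]
    simp only [Finset.mul_sum]
    exact Finset.sum_congr rfl fun i _ => Finset.sum_congr rfl fun j _ => by ring
  rw [tsum_congr hsq, hdouble.tsum_eq]
  simp only [dotProduct, Matrix.mulVec, Matrix.neg_apply, hessPhi, Matrix.of_apply, neg_neg,
    Finset.mul_sum, mul_assoc]

theorem isHermitian_neg_hessPhi (d : ℕ) (a : (Fin d → ℤ) → ℝ) : (-hessPhi d a).IsHermitian := by
  refine Matrix.IsHermitian.ext fun i j => ?_
  simp only [Matrix.neg_apply, hessPhi, Matrix.of_apply, star_trivial, mul_right_comm]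

theorem tendsto_sq_mul_phiSymb_hessPhi (hpos : ∀ z, z ≠ 0 → 0 ≤ a z) (hsum : HasSum a 0)
    (hvar : Summable fun z : Fin d → ℤ => (∑ i, (z i : ℝ) ^ 2) * a z) (v : Fin d → ℝ) :
    Tendsto (fun s : ℝ => s ^ 2 * phiSymb d a (s⁻¹ • v)) atTop
      (𝓝 (-(v ⬝ᵥ (-hessPhi d a) *ᵥ v) / 2)) := by
  rw [dotProduct_neg_hessPhi_mulVec hpos hvar]
  exact tendsto_sq_mul_phiSymb hpos hsum hvar v

theorem posDef_neg_hessPhi (hpos : ∀ z, z ≠ 0 → 0 ≤ a z) (hsum : HasSum a 0)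
    (hvar : Summable fun z : Fin d → ℤ => (∑ i, (z i : ℝ) ^ 2) * a z)
    (hirr : AddSubgroup.closure {z | 0 < a z} = ⊤) : (-hessPhi d a).PosDef := by
  obtain ⟨c, hc, hφ⟩ := exists_phiSymb_le_neg_mul_norm_sq hpos hsum hirr
  refine .of_dotProduct_mulVec_pos (isHermitian_neg_hessPhi d a) fun v hv => ?_
  have hquad := le_neg_mul_norm_sq_of_tendsto_sq_mul_apply_inv_smul (fourierCube_mem_nhds_zero d) hφ
    (tendsto_sq_mul_phiSymb_hessPhi hpos hsum hvar v)
  have hcv : 0 < c * ‖v‖ ^ 2 := mul_pos hc (pow_pos (norm_pos_iff.2 hv) 2)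
  rw [star_trivial]
  linarith

end Hessian

end Symbol

section LocalLimit

variable {d : ℕ} {a : (Fin d → ℤ) → ℝ}

theorem continuous_ptrans (ha : Summable a) (x y : Fin d → ℤ) :
    Continuous fun t => ptrans d a t x y := by
  have hφ := continuous_phiSymb ha
  refine continuous_const.mul (continuous_parametric_integral_of_continuous ?_ isCompact_Icc)
  simp only [Function.uncurry_def]
  fun_prop

theorem gammaConst_eq_inv_mul_div_sqrt_det (hH : (-hessPhi d a).PosDef) :
    gammaConst d a = ((2 * π) ^ d)⁻¹ * (√(2 * π) ^ d / √(-hessPhi d a).det) := by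
  have habs : |(hessPhi d a).det| = (-hessPhi d a).det := by
    rw [← abs_of_pos hH.det_pos, Matrix.det_neg, abs_mul, abs_neg_one_pow, one_mul]
  have hsq : (2 * π) ^ d = √(2 * π) ^ d * √(2 * π) ^ d := by
    rw [← mul_pow, mul_self_sqrt (by positivity)]
  rw [gammaConst, habs, rpow_div_two_eq_sqrt _ (by positivity), rpow_natCast, hsq]
  have := (sqrt_pos.2 hH.det_pos).ne'
  field_simp

theorem tendsto_pow_mul_ptrans_sq (hpos : ∀ z, z ≠ 0 → 0 ≤ a z) (hsum : HasSum a 0)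
    (hvar : Summable fun z : Fin d → ℤ => (∑ i, (z i : ℝ) ^ 2) * a z)
    (hirr : AddSubgroup.closure {z | 0 < a z} = ⊤) (x y : Fin d → ℤ) :
    Tendsto (fun s => s ^ d * ptrans d a (s ^ 2) x y) atTop (𝓝 (gammaConst d a)) := by
  obtain ⟨c, hc, hφ⟩ := exists_phiSymb_le_neg_mul_norm_sq hpos hsum hirr
  have hH := posDef_neg_hessPhi hpos hsum hvar hirr
  have hcos : Continuous fun θ : Fin d → ℝ => cos (∑ i, θ i * ((y i : ℝ) - (x i : ℝ))) := by
    fun_prop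
  have hlim := (tendsto_pow_finrank_mul_setIntegral_exp_sq_mul volume
    (continuous_phiSymb hsum.summable).measurable hcos.measurable measurableSet_Icc
    (fourierCube_mem_nhds_zero d) hc hφ (tendsto_sq_mul_phiSymb_hessPhi hpos hsum hvar)
    (fun θ _ => abs_cos_le_one _) hcos.continuousAt).const_mul ((2 * π) ^ d)⁻¹
  simp only [integral_exp_neg_dotProduct_mulVec_div_two_of_posDef hH, Module.finrank_fin_fun,
    Fintype.card_fin, Pi.zero_apply, zero_mul, Finset.sum_const_zero, cos_zero, mul_one,
    ← gammaConst_eq_inv_mul_div_sqrt_det hH] at hlim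
  refine hlim.congr fun s => ?_
  simp only [ptrans, mul_left_comm (s ^ d), mul_comm (s ^ 2)]

theorem tendsto_rpow_mul_ptrans (hpos : ∀ z, z ≠ 0 → 0 ≤ a z) (hsum : HasSum a 0)
    (hvar : Summable fun z : Fin d → ℤ => (∑ i, (z i : ℝ) ^ 2) * a z)
    (hirr : AddSubgroup.closure {z | 0 < a z} = ⊤) (x y : Fin d → ℤ) :
    Tendsto (fun t => t ^ ((d : ℝ) / 2) * ptrans d a t x y) atTop (𝓝 (gammaConst d a)) := by
  refine ((tendsto_pow_mul_ptrans_sq hpos hsum hvar hirr x y).comp tendsto_sqrt_atTop).congr' ?_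
  filter_upwards [eventually_ge_atTop 0] with t ht
  rw [Function.comp_apply, sq_sqrt ht, rpow_div_two_eq_sqrt _ ht, rpow_natCast]

end LocalLimit

theorem natCast_div_two_sub_one_of_odd {d : ℕ} (hd : 3 ≤ d) (h : Odd d) :
    ((d / 2 - 1 : ℕ) : ℝ) + 2 - d / 2 = 1 / 2 := by
  obtain ⟨k, rfl⟩ := h
  rw [show (2 * k + 1) / 2 - 1 = k - 1 by lia, Nat.cast_sub (by lia)]
  push_cast
  ring

theorem natCast_div_two_sub_one_of_even {d : ℕ} (hd : 2 ≤ d) (h : Even d) :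
    ((d / 2 - 1 : ℕ) : ℝ) + 2 - d / 2 = 1 := by
  obtain ⟨k, rfl⟩ := h
  rw [show (k + k) / 2 - 1 = k - 1 by lia, Nat.cast_sub (by lia)]
  push_cast
  ring

theorem Glam_eq_laplaceTransform (d : ℕ) (a : (Fin d → ℤ) → ℝ) (lam : ℝ) (x y : Fin d → ℤ) :
    Glam d a lam x y = laplaceTransform (fun t => ptrans d a t x y) lam := rfl

theorem K_deriv_asymptotic_general {d : ℕ} {a : (Fin d → ℤ) → ℝ}
    (hpos : ∀ z : Fin d → ℤ, z ≠ 0 → 0 ≤ a z) (hsum : HasSum a 0)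
    (hvar : Summable fun z : Fin d → ℤ => (∑ i, (z i : ℝ) ^ 2) * a z)
    (hirr : AddSubgroup.closure {z : Fin d → ℤ | 0 < a z} = ⊤) (hd : 3 ≤ d) (x y : Fin d → ℤ)
    {n : ℕ} (hn : (d : ℝ) / 2 < n + 2) :
    Tendsto (fun lam : ℝ => lam ^ ((n : ℝ) + 2 - d / 2) * ((-1) ^ n *
        iteratedDeriv n (fun mu => (Glam d a 0 x y - Glam d a mu x y) / mu) lam))
      (𝓝[>] 0) (𝓝 (2 * gammaConst d a * Gamma (n + 2 - d / 2) / (d - 2))) := by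
  have hβ : 1 < (d : ℝ) / 2 := by
    rw [one_lt_div two_pos]
    exact_mod_cast hd
  have hconst : 2 * gammaConst d a * Gamma (n + 2 - d / 2) / (d - 2) =
      gammaConst d a / (d / 2 - 1) * Gamma (n + 2 - d / 2) := by
    rw [div_sub_one two_ne_zero, div_div_eq_mul_div]
    ring
  simp only [hconst, Glam_eq_laplaceTransform]
  exact tendsto_rpow_mul_iteratedDeriv_laplaceTransform_zero_sub_div
    (continuous_ptrans hsum.summable x y) hβ hn (tendsto_rpow_mul_ptrans hpos hsum hvar hirr x y)

/-- For `d ≥ 3`, `m = ⌊d/2⌋ - 1`, `K_d(λ;r) = (G_0(0,r) - G_λ(0,r))/λ`, one has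
`(-1)^m K_d^{(m)}(λ;r) ~ 2γ_d√π/((d-2)√λ)` (d odd) and `~ 2γ_d/((d-2)λ)` (d even),
as `λ → 0+`. -/
theorem K_deriv_asymptotic
    (d : ℕ) (hd : 1 ≤ d) (a : (Fin d → ℤ) → ℝ)
    (hpos : ∀ z : Fin d → ℤ, z ≠ 0 → 0 ≤ a z)
    (hneg : a 0 < 0)
    (hsymm : ∀ z : Fin d → ℤ, a (-z) = a z)
    (hsum : HasSum a 0)
    (hvar : Summable fun z : Fin d → ℤ => (∑ i, ((z i : ℝ)) ^ 2) * a z)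
    (hirr : AddSubgroup.closure {z : Fin d → ℤ | 0 < a z} = ⊤)
    (hd3 : 3 ≤ d) (r : Fin d → ℤ) :
    (Odd d →
      Tendsto (fun lam : ℝ => Real.sqrt lam *
          ((-1 : ℝ) ^ (d / 2 - 1) *
            iteratedDeriv (d / 2 - 1)
              (fun mu : ℝ => (Glam d a 0 0 r - Glam d a mu 0 r) / mu) lam))
        (𝓝[>] (0 : ℝ)) (𝓝 (2 * gammaConst d a * Real.sqrt π / ((d : ℝ) - 2)))) ∧
    (Even d →
      Tendsto (fun lam : ℝ => lam *
          ((-1 : ℝ) ^ (d / 2 - 1) *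
            iteratedDeriv (d / 2 - 1)
              (fun mu : ℝ => (Glam d a 0 0 r - Glam d a mu 0 r) / mu) lam))
        (𝓝[>] (0 : ℝ)) (𝓝 (2 * gammaConst d a / ((d : ℝ) - 2)))) := by
  refine ⟨fun hodd => ?_, fun heven => ?_⟩
  · have hexp := natCast_div_two_sub_one_of_odd hd3 hodd
    have h := K_deriv_asymptotic_general hpos hsum hvar hirr hd3 0 r (n := d / 2 - 1) (by linarith)
    simpa only [hexp, Gamma_one_half_eq, ← sqrt_eq_rpow] using h
  · have hexp := natCast_div_two_sub_one_of_even (by lia) heven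
    have h := K_deriv_asymptotic_general hpos hsum hvar hirr hd3 0 r (n := d / 2 - 1) (by linarith)
    simpa only [hexp, Gamma_one, mul_one, rpow_one] using h
end

section
/- Let d ≥ 3 and let x, y ∈ ℤ^d with y ≠ 0, x ≠ 0 and x ≠ y. Then lim_{λ→0+} (G_λ(x, y) G_λ(0, 0) - G_λ(0, x) G_λ(0, y)) / (G_λ(0, 0)² - G_λ(0, y)²) = (G_0(0, 0) ρ_d(y) - G_0(0, 0) ρ_d(y - x) + G_0(0, y) ρ_d(x)) / (ρ_d(y) (G_0(0, 0) + G_0(0, y))). (This limit is the total mass H_{x,y,0}(∞) of the taboo hitting-time distribution, since the quotient is its Laplace–Stieltjes transform.) -/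
open MeasureTheory Real Filter Topology Asymptotics

/-!
In Fourier variables `G_λ(x, y) = (2π)^{-d} ∫ cos⟨y - x, θ⟩ / (λ - φ(θ)) dθ`. Once `1/φ` is
integrable over the cube, dominated convergence gives `G_λ → G_0`, and
`ρ_d(y - x) = -a(0) (G_0(0, 0) - G_0(x, y))`; so the limit is the quotient at `λ = 0`, with
numerator and denominator both multiplied by `-a(0)`. The denominator does not vanish:
`|cos⟨y, θ⟩| < 1` for almost every `θ`, hence `|G_0(0, y)| < G_0(0, 0)`.

For the integrability of `1/φ`, recall that `-φ(θ) = ∑_z a(z) (1 - cos⟨z, θ⟩)`. The set of `z` for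
which `1 - cos⟨z, ·⟩` is bounded by a multiple of `-φ` contains the support of the jump rates and is
a subgroup, so by irreducibility it contains the standard basis. On the cube this yields
`‖θ‖² ≤ C (-φ(θ))`, and `‖θ‖⁻²` is locally integrable in dimension at least three.
-/

lemma integral_lt_integral_of_ae_lt {Θ : Type*} [MeasurableSpace Θ] {μ : Measure Θ}
    {f g : Θ → ℝ} (hf : Integrable f μ) (hg : Integrable g μ) (hμ : μ ≠ 0)
    (hlt : ∀ᵐ θ ∂μ, f θ < g θ) : ∫ θ, f θ ∂μ < ∫ θ, g θ ∂μ := by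
  have hnonneg : 0 ≤ᵐ[μ] fun θ => g θ - f θ := hlt.mono fun θ h => (sub_pos.2 h).le
  have hsupp : Function.support (fun θ => g θ - f θ) =ᵐ[μ] Set.univ :=
    eventuallyEq_univ.2 <| hlt.mono fun θ h => (sub_pos.2 h).ne'
  rw [← sub_pos, ← integral_sub hg hf,
    integral_pos_iff_support_of_nonneg_ae hnonneg (hg.sub hf), measure_congr hsupp]
  exact Measure.measure_univ_pos.2 hμ

lemma norm_div_add_le_norm_div {c s lam : ℝ} (hs : 0 < s) (hlam : 0 ≤ lam) :
    ‖c / (lam + s)‖ ≤ ‖c / s‖ := by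
  rw [norm_div, norm_div, Real.norm_of_nonneg (by positivity : 0 ≤ lam + s),
    Real.norm_of_nonneg hs.le]
  gcongr
  linarith

section LaplaceTransform

variable {Θ : Type*} [MeasurableSpace Θ] {μ : Measure Θ} {ψ f : Θ → ℝ}

lemma integrable_div_const_add (hf : AEStronglyMeasurable f μ) (hψm : AEStronglyMeasurable ψ μ)
    (hψ : ∀ᵐ θ ∂μ, 0 < ψ θ) (hint : Integrable (fun θ => f θ / ψ θ) μ) {lam : ℝ}
    (hlam : 0 ≤ lam) : Integrable (fun θ => f θ / (lam + ψ θ)) μ :=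
  hint.mono (hf.div₀ (aestronglyMeasurable_const.add hψm)) <|
    hψ.mono fun _ h => norm_div_add_le_norm_div h hlam

lemma tendsto_integral_div_add (hf : AEStronglyMeasurable f μ) (hψm : AEStronglyMeasurable ψ μ)
    (hψ : ∀ᵐ θ ∂μ, 0 < ψ θ) (hint : Integrable (fun θ => f θ / ψ θ) μ) :
    Tendsto (fun lam => ∫ θ, f θ / (lam + ψ θ) ∂μ) (𝓝[>] 0) (𝓝 (∫ θ, f θ / ψ θ ∂μ)) := by
  refine tendsto_integral_filter_of_dominated_convergence (fun θ => ‖f θ / ψ θ‖)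
    (.of_forall fun lam => hf.div₀ (aestronglyMeasurable_const.add hψm)) ?_ hint.norm ?_
  · filter_upwards [self_mem_nhdsWithin] with lam hlam
    exact hψ.mono fun θ h => norm_div_add_le_norm_div h (le_of_lt hlam)
  · filter_upwards [hψ] with θ h
    have hcont : ContinuousAt (fun lam : ℝ => f θ / (lam + ψ θ)) 0 :=
      continuousAt_const.div (by fun_prop) (by simpa using h.ne')
    simpa [ContinuousAt] using hcont.tendsto.mono_left nhdsWithin_le_nhds

lemma integral_Ioi_exp_neg_mul {s : ℝ} (hs : 0 < s) : ∫ t in Set.Ioi 0, exp (-s * t) = s⁻¹ := by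
  rw [integral_exp_mul_Ioi (neg_neg_of_pos hs), mul_zero, exp_zero, neg_div_neg_eq, one_div]

lemma integral_Ioi_integral_exp_neg_mul [SFinite μ] (hf : AEStronglyMeasurable f μ)
    (hψm : AEStronglyMeasurable ψ μ) (hψ : ∀ᵐ θ ∂μ, 0 < ψ θ)
    (hint : Integrable (fun θ => f θ / ψ θ) μ) :
    ∫ t in Set.Ioi 0, ∫ θ, exp (-ψ θ * t) * f θ ∂μ = ∫ θ, f θ / ψ θ ∂μ := by
  have hmeas : AEStronglyMeasurable (fun p : ℝ × Θ => exp (-ψ p.2 * p.1) * f p.2)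
      ((volume.restrict (Set.Ioi 0)).prod μ) :=
    (continuous_exp.comp_aestronglyMeasurable
      (hψm.comp_snd.neg.mul measurable_fst.aestronglyMeasurable)).mul hf.comp_snd
  have hprod : Integrable (fun p : ℝ × Θ => exp (-ψ p.2 * p.1) * f p.2)
      ((volume.restrict (Set.Ioi 0)).prod μ) := by
    refine (integrable_prod_iff' hmeas).2 ⟨?_, hint.norm.congr ?_⟩ <;> filter_upwards [hψ] with θ h
    · exact (integrableOn_exp_mul_Ioi (neg_neg_of_pos h) 0).mul_const _
    · simp only [norm_mul, norm_div, Real.norm_eq_abs, abs_exp]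
      rw [integral_mul_const, integral_Ioi_exp_neg_mul h, abs_of_pos h, div_eq_inv_mul]
  rw [integral_integral_swap hprod]
  refine integral_congr_ae (hψ.mono fun θ h => ?_)
  simp only [integral_mul_const, integral_Ioi_exp_neg_mul h, div_eq_inv_mul]

end LaplaceTransform

lemma ae_dotProduct_notMem_of_countable {ι : Type*} [Fintype ι] {z : ι → ℝ} (hz : z ≠ 0)
    {s : Set ℝ} (hs : s.Countable) : ∀ᵐ θ : ι → ℝ, z ⬝ᵥ θ ∉ s := by
  have hsurj : Function.Surjective (dotProductBilin ℝ ℝ z) :=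
    LinearMap.surjective fun h => hz <| dotProduct_eq_zero z fun θ => LinearMap.congr_fun h θ
  exact (ae_comp_linearMap_mem_iff _ volume volume hsurj hs.measurableSet.compl).2
    (hs.ae_notMem volume)

lemma countable_setOf_sin_eq_zero : {u : ℝ | sin u = 0}.Countable :=
  (Set.countable_range fun n : ℤ => n * π).mono fun _ hu => sin_eq_zero_iff.1 hu

lemma ae_sin_sum_mul_ne_zero {ι : Type*} [Fintype ι] {z : ι → ℤ} (hz : z ≠ 0) :
    ∀ᵐ θ : ι → ℝ, sin (∑ i, (z i : ℝ) * θ i) ≠ 0 :=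
  ae_dotProduct_notMem_of_countable (z := fun i => (z i : ℝ))
    (fun h => hz <| funext fun i => by simpa using congrFun h i) countable_setOf_sin_eq_zero

lemma abs_cos_lt_one_of_sin_ne_zero {u : ℝ} (hu : sin u ≠ 0) : |cos u| < 1 := by
  rw [← sq_lt_one_iff_abs_lt_one, cos_sq']
  linarith [sq_pos_of_ne_zero hu]

lemma one_sub_cos_add_le (u v : ℝ) :
    1 - cos (u + v) ≤ 2 * ((1 - cos u) + (1 - cos v)) := by
  rw [cos_add]
  -- The slack is half of `|e^{iu} + e^{-iv} - 2|²`.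
  nlinarith [sq_nonneg (cos u + cos v - 2), sq_nonneg (sin u - sin v),
    sin_sq_add_cos_sq u, sin_sq_add_cos_sq v]

namespace LatticeWalk

/-- The cube `[-π, π]^d`, a fundamental domain of the torus dual to `ℤ^d`. -/
abbrev cube (d : ℕ) : Set (Fin d → ℝ) := Set.Icc (fun _ => -π) (fun _ => π)

/-- Transience of the walk with jump rates `a`, in its Fourier form `∫ (-φ)⁻¹ < ∞`. The value
`0⁻¹ = 0` makes this meaningful only when `φ < 0` almost everywhere. -/
def IsTransient {d : ℕ} (a : (Fin d → ℤ) → ℝ) : Prop :=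
  IntegrableOn (fun θ => (-phiSymb d a θ)⁻¹) (cube d)

variable {d : ℕ} {a : (Fin d → ℤ) → ℝ}

section Symbol

lemma continuous_phiSymb (ha : Summable a) : Continuous (phiSymb d a) := by
  refine continuous_tsum (fun z => by fun_prop) ha.abs fun z θ => ?_
  rw [norm_mul]
  exact mul_le_of_le_one_right (norm_nonneg _) (abs_cos_le_one _)

lemma hasSum_neg_phiSymb (hsum : HasSum a 0) (θ : Fin d → ℝ) :
    HasSum (fun z => a z * (1 - cos (∑ i, (z i : ℝ) * θ i))) (-phiSymb d a θ) := by
  have hcos : Summable fun z => a z * cos (∑ i, (z i : ℝ) * θ i) := by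
    refine hsum.summable.abs.of_norm_bounded fun z => ?_
    rw [norm_mul]
    exact mul_le_of_le_one_right (norm_nonneg _) (abs_cos_le_one _)
  simpa [mul_sub, phiSymb] using hsum.sub hcos.hasSum

lemma mul_one_sub_cos_le_neg_phiSymb (hpos : ∀ z, z ≠ 0 → 0 ≤ a z) (hsum : HasSum a 0)
    (θ : Fin d → ℝ) (z : Fin d → ℤ) :
    a z * (1 - cos (∑ i, (z i : ℝ) * θ i)) ≤ -phiSymb d a θ := by
  refine le_hasSum (hasSum_neg_phiSymb hsum θ) z fun w _ => ?_
  rcases eq_or_ne w 0 with rfl | hw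
  · simp
  · exact mul_nonneg (hpos w hw) (sub_nonneg.2 (cos_le_one _))

lemma neg_phiSymb_nonneg (hpos : ∀ z, z ≠ 0 → 0 ≤ a z) (hsum : HasSum a 0) (θ : Fin d → ℝ) :
    0 ≤ -phiSymb d a θ := by
  simpa using mul_one_sub_cos_le_neg_phiSymb hpos hsum θ 0

lemma exists_ne_zero_pos (hpos : ∀ z, z ≠ 0 → 0 ≤ a z) (hneg : a 0 < 0) (hsum : HasSum a 0) :
    ∃ z ≠ 0, 0 < a z := by
  by_contra! h
  have h0 : HasSum a (a 0) := hasSum_single 0 fun z hz => (h z hz).antisymm (hpos z hz)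
  exact hneg.ne (h0.unique hsum)

lemma ae_neg_phiSymb_pos (hpos : ∀ z, z ≠ 0 → 0 ≤ a z) (hneg : a 0 < 0) (hsum : HasSum a 0) :
    ∀ᵐ θ, 0 < -phiSymb d a θ := by
  obtain ⟨z, hz, haz⟩ := exists_ne_zero_pos hpos hneg hsum
  filter_upwards [ae_sin_sum_mul_ne_zero hz] with θ hθ
  have hcos := (abs_lt.1 (abs_cos_lt_one_of_sin_ne_zero hθ)).2
  exact (mul_pos haz (sub_pos.2 hcos)).trans_le (mul_one_sub_cos_le_neg_phiSymb hpos hsum θ z)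

lemma exists_one_sub_cos_le_mul_neg_phiSymb (hpos : ∀ z, z ≠ 0 → 0 ≤ a z) (hsum : HasSum a 0)
    {z : Fin d → ℤ} (hz : z ∈ AddSubgroup.closure {z | 0 < a z}) :
    ∃ C, 0 ≤ C ∧ ∀ θ, 1 - cos (∑ i, (z i : ℝ) * θ i) ≤ C * -phiSymb d a θ := by
  induction hz using AddSubgroup.closure_induction with
  | mem z hz =>
    have haz : 0 < a z := hz
    refine ⟨(a z)⁻¹, by positivity, fun θ => ?_⟩
    rw [inv_mul_eq_div, le_div_iff₀' haz]
    exact mul_one_sub_cos_le_neg_phiSymb hpos hsum θ z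
  | zero => exact ⟨0, le_rfl, by simp⟩
  | add v w _ _ hv hw =>
    obtain ⟨C, hC0, hC⟩ := hv
    obtain ⟨D, hD0, hD⟩ := hw
    refine ⟨2 * (C + D), by positivity, fun θ => ?_⟩
    have hadd := one_sub_cos_add_le (∑ i, (v i : ℝ) * θ i) (∑ i, (w i : ℝ) * θ i)
    simp only [Pi.add_apply, Int.cast_add, add_mul, Finset.sum_add_distrib]
    linarith [hC θ, hD θ]
  | neg v _ hv => simpa using hv

lemma exists_norm_sq_le_mul_neg_phiSymb (hpos : ∀ z, z ≠ 0 → 0 ≤ a z) (hsum : HasSum a 0)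
    (hirr : AddSubgroup.closure {z : Fin d → ℤ | 0 < a z} = ⊤) :
    ∃ C, ∀ θ ∈ cube d, ‖θ‖ ^ 2 ≤ C * -phiSymb d a θ := by
  choose C hC0 hC using fun i : Fin d => exists_one_sub_cos_le_mul_neg_phiSymb hpos hsum
    (hirr ▸ AddSubgroup.mem_top (Pi.single i 1))
  have hφ := neg_phiSymb_nonneg hpos hsum
  refine ⟨∑ i, π ^ 2 / 2 * C i, fun θ hθ => ?_⟩
  have hK : 0 ≤ ∑ i, π ^ 2 / 2 * C i :=
    Finset.sum_nonneg fun i _ => mul_nonneg (by positivity) (hC0 i)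
  have hcoord (i : Fin d) : θ i ^ 2 ≤ (∑ i, π ^ 2 / 2 * C i) * -phiSymb d a θ :=
    calc θ i ^ 2 = π ^ 2 / 2 * (2 / π ^ 2 * θ i ^ 2) := by field_simp
      _ ≤ π ^ 2 / 2 * (1 - cos (θ i)) := by
        gcongr
        linarith [cos_le_one_sub_mul_cos_sq (abs_le.2 ⟨hθ.1 i, hθ.2 i⟩)]
      _ ≤ π ^ 2 / 2 * (C i * -phiSymb d a θ) := by
        gcongr
        simpa [Pi.single_apply] using hC i θ
      _ ≤ (∑ i, π ^ 2 / 2 * C i) * -phiSymb d a θ := by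
        rw [← mul_assoc]
        exact mul_le_mul_of_nonneg_right (Finset.single_le_sum
          (fun j _ => mul_nonneg (by positivity) (hC0 j)) (Finset.mem_univ i)) (hφ θ)
  rw [← le_sqrt (norm_nonneg _) (mul_nonneg hK (hφ θ)), pi_norm_le_iff_of_nonneg (sqrt_nonneg _)]
  exact fun i => abs_le_sqrt (hcoord i)

lemma isTransient_of_three_le (hd : 3 ≤ d) (hpos : ∀ z, z ≠ 0 → 0 ≤ a z) (hsum : HasSum a 0)
    (hirr : AddSubgroup.closure {z : Fin d → ℤ | 0 < a z} = ⊤) : IsTransient a := by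
  obtain ⟨C, hC⟩ := exists_norm_sq_le_mul_neg_phiSymb hpos hsum hirr
  have hrank : Module.finrank ℝ (Fin d → ℝ) = d := by simp
  have hpow : IntegrableOn (fun θ : Fin d → ℝ => ‖θ‖ ^ (-2 : ℝ)) (cube d) := by
    refine LocallyIntegrable.integrableOn_isCompact
      (locallyIntegrable_of_norm_le_rpow (C := 1) (α := 2) (by omega) ?_
        (.of_forall fun θ => ?_) (measurable_norm.pow_const _).aestronglyMeasurable) isCompact_Icc
    · rw [hrank]
      exact_mod_cast hd
    · rw [one_mul, Real.norm_of_nonneg (by positivity)]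
  refine (hpow.const_mul C).mono'
    (continuous_phiSymb hsum.summable).measurable.neg.inv.aestronglyMeasurable ?_
  filter_upwards [ae_restrict_mem measurableSet_Icc] with θ hθ
  have hφ := neg_phiSymb_nonneg hpos hsum θ
  rw [Real.norm_of_nonneg (inv_nonneg.2 hφ), rpow_neg (norm_nonneg θ), rpow_two]
  rcases eq_or_ne θ 0 with rfl | hθ0
  · simp [phiSymb, hsum.tsum_eq]
  · have hle := hC θ hθ
    have hnorm : 0 < ‖θ‖ ^ 2 := by positivity
    have hφpos := hφ.lt_of_ne' (right_ne_zero_of_mul (hnorm.trans_le hle).ne')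
    rwa [← div_eq_mul_inv, le_div_iff₀ hnorm, inv_mul_eq_div, div_le_iff₀ hφpos]

end Symbol

section Green

lemma integrableOn_cos_div_neg_phiSymb (htrans : IsTransient a) (z : Fin d → ℤ) :
    IntegrableOn (fun θ => cos (∑ i, (z i : ℝ) * θ i) / -phiSymb d a θ) (cube d) :=
  htrans.bdd_mul (c := 1) (Continuous.aestronglyMeasurable (by fun_prop))
    (.of_forall fun _ => abs_cos_le_one _)

lemma glam_eq_setIntegral (ha : Summable a)
    (hφ : ∀ᵐ θ ∂volume.restrict (cube d), 0 < -phiSymb d a θ) (htrans : IsTransient a)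
    {lam : ℝ} (hlam : 0 ≤ lam) (x y : Fin d → ℤ) :
    Glam d a lam x y = ((2 * π) ^ d)⁻¹ * ∫ θ in cube d,
      cos (∑ i, ((y - x) i : ℝ) * θ i) / (lam + -phiSymb d a θ) := by
  have hcos : Continuous fun θ : Fin d → ℝ => cos (∑ i, ((y - x) i : ℝ) * θ i) := by fun_prop
  have hφm := (continuous_phiSymb ha).neg.aestronglyMeasurable (μ := volume.restrict (cube d))
  rw [← integral_Ioi_integral_exp_neg_mul (ψ := fun θ => lam + -phiSymb d a θ)
    hcos.aestronglyMeasurable (aestronglyMeasurable_const.add hφm)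
    (hφ.mono fun θ h => by positivity)
    (integrable_div_const_add hcos.aestronglyMeasurable hφm hφ
      (integrableOn_cos_div_neg_phiSymb htrans _) hlam), ← integral_const_mul, Glam]
  congr 1 with t
  rw [ptrans, mul_left_comm, ← integral_const_mul]
  congr 2 with θ
  rw [← mul_assoc, ← exp_add]
  congr 2
  · ring
  · simp [mul_comm]

lemma glam_zero_eq_setIntegral (ha : Summable a)
    (hφ : ∀ᵐ θ ∂volume.restrict (cube d), 0 < -phiSymb d a θ) (htrans : IsTransient a)
    (x y : Fin d → ℤ) :
    Glam d a 0 x y = ((2 * π) ^ d)⁻¹ * ∫ θ in cube d,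
      cos (∑ i, ((y - x) i : ℝ) * θ i) / -phiSymb d a θ := by
  simpa only [zero_add] using glam_eq_setIntegral ha hφ htrans le_rfl x y

lemma tendsto_glam (ha : Summable a)
    (hφ : ∀ᵐ θ ∂volume.restrict (cube d), 0 < -phiSymb d a θ) (htrans : IsTransient a)
    (x y : Fin d → ℤ) :
    Tendsto (fun lam => Glam d a lam x y) (𝓝[>] 0) (𝓝 (Glam d a 0 x y)) := by
  rw [glam_zero_eq_setIntegral ha hφ htrans]
  refine ((tendsto_integral_div_add (Continuous.aestronglyMeasurable (by fun_prop))
    (continuous_phiSymb ha).neg.aestronglyMeasurable hφ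
    (integrableOn_cos_div_neg_phiSymb htrans (y - x))).const_mul _).congr' ?_
  filter_upwards [self_mem_nhdsWithin] with lam hlam
  exact (glam_eq_setIntegral ha hφ htrans (le_of_lt hlam) x y).symm

lemma volume_restrict_cube_ne_zero : volume.restrict (cube d) ≠ 0 := by
  rw [Ne, Measure.restrict_eq_zero, Real.volume_Icc_pi]
  simp [pi_pos]

lemma abs_glam_zero_lt (ha : Summable a)
    (hφ : ∀ᵐ θ ∂volume.restrict (cube d), 0 < -phiSymb d a θ) (htrans : IsTransient a)
    {x y : Fin d → ℤ} (hxy : x ≠ y) : |Glam d a 0 x y| < Glam d a 0 0 0 := by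
  rw [glam_zero_eq_setIntegral ha hφ htrans, glam_zero_eq_setIntegral ha hφ htrans, abs_mul,
    abs_of_pos (by positivity)]
  gcongr
  refine (norm_integral_le_integral_norm _).trans_lt <| integral_lt_integral_of_ae_lt
    (integrableOn_cos_div_neg_phiSymb htrans _).norm (integrableOn_cos_div_neg_phiSymb htrans _)
    volume_restrict_cube_ne_zero ?_
  filter_upwards [hφ, ae_restrict_of_ae (ae_sin_sum_mul_ne_zero (sub_ne_zero.2 hxy.symm))]
    with θ hθ hsin
  rw [norm_div, Real.norm_of_nonneg hθ.le]
  gcongr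
  simpa using abs_cos_lt_one_of_sin_ne_zero hsin

lemma rhoConst_sub (ha : Summable a)
    (hφ : ∀ᵐ θ ∂volume.restrict (cube d), 0 < -phiSymb d a θ) (htrans : IsTransient a)
    {x y : Fin d → ℤ} (hxy : x ≠ y) :
    rhoConst d a (y - x) = -a 0 * (Glam d a 0 0 0 - Glam d a 0 x y) := by
  rw [rhoConst, if_neg (sub_ne_zero.2 hxy.symm), glam_zero_eq_setIntegral ha hφ htrans,
    glam_zero_eq_setIntegral ha hφ htrans, ← mul_sub,
    ← integral_sub (integrableOn_cos_div_neg_phiSymb htrans _)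
      (integrableOn_cos_div_neg_phiSymb htrans _), ← mul_assoc, div_eq_mul_inv]
  congr 2 with θ
  rw [← sub_div, div_neg, ← neg_div, neg_sub]
  simp

end Green

end LatticeWalk

theorem taboo_total_mass_high_dim_general {d : ℕ} {a : (Fin d → ℤ) → ℝ}
    (hpos : ∀ z, z ≠ 0 → 0 ≤ a z) (hneg : a 0 < 0) (hsum : HasSum a 0)
    (htrans : LatticeWalk.IsTransient a) {x y : Fin d → ℤ} (hy : y ≠ 0) (hx : x ≠ 0)
    (hxy : x ≠ y) :
    Tendsto (fun lam : ℝ =>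
        (Glam d a lam x y * Glam d a lam 0 0 - Glam d a lam 0 x * Glam d a lam 0 y) /
          ((Glam d a lam 0 0) ^ 2 - (Glam d a lam 0 y) ^ 2))
      (𝓝[>] (0 : ℝ))
      (𝓝 ((Glam d a 0 0 0 * rhoConst d a y - Glam d a 0 0 0 * rhoConst d a (y - x) +
            Glam d a 0 0 y * rhoConst d a x) /
          (rhoConst d a y * (Glam d a 0 0 0 + Glam d a 0 0 y)))) := by
  have hφ := ae_restrict_of_ae (s := LatticeWalk.cube d)
    (LatticeWalk.ae_neg_phiSymb_pos hpos hneg hsum)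
  have hG := LatticeWalk.tendsto_glam hsum.summable hφ htrans
  have hρ {v w : Fin d → ℤ} (h : v ≠ w) := LatticeWalk.rhoConst_sub hsum.summable hφ htrans h
  have hρx := hρ hx.symm
  have hρy := hρ hy.symm
  rw [sub_zero] at hρx hρy
  have hlt := LatticeWalk.abs_glam_zero_lt hsum.summable hφ htrans hy.symm
  have hden : Glam d a 0 0 0 ^ 2 - Glam d a 0 0 y ^ 2 ≠ 0 :=
    (sub_pos.2 (sq_lt_sq' (abs_lt.1 hlt).1 (abs_lt.1 hlt).2)).ne'
  convert! (((hG x y).mul (hG 0 0)).sub ((hG 0 x).mul (hG 0 y))).div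
    (((hG 0 0).pow 2).sub ((hG 0 y).pow 2)) hden using 2
  rw [hρx, hρy, hρ hxy]
  refine Eq.trans ?_ (mul_div_mul_left _ _ (neg_ne_zero.2 hneg.ne))
  congr 1 <;> ring

/-- For `d ≥ 3` and `x, y ≠ 0`, `x ≠ y`, the Laplace–Stieltjes transform of the taboo
hitting time converges as `λ → 0+` to
`(G_0(0,0)ρ_d(y) - G_0(0,0)ρ_d(y-x) + G_0(0,y)ρ_d(x))/(ρ_d(y)(G_0(0,0) + G_0(0,y)))`. -/
theorem taboo_total_mass_high_dim
    (d : ℕ) (hd : 1 ≤ d) (a : (Fin d → ℤ) → ℝ)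
    (hpos : ∀ z : Fin d → ℤ, z ≠ 0 → 0 ≤ a z)
    (hneg : a 0 < 0)
    (hsymm : ∀ z : Fin d → ℤ, a (-z) = a z)
    (hsum : HasSum a 0)
    (hvar : Summable fun z : Fin d → ℤ => (∑ i, ((z i : ℝ)) ^ 2) * a z)
    (hirr : AddSubgroup.closure {z : Fin d → ℤ | 0 < a z} = ⊤)
    (hd3 : 3 ≤ d) (x y : Fin d → ℤ) (hy : y ≠ 0) (hx : x ≠ 0) (hxy : x ≠ y) :
    Tendsto (fun lam : ℝ =>
        (Glam d a lam x y * Glam d a lam 0 0 - Glam d a lam 0 x * Glam d a lam 0 y) /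
          ((Glam d a lam 0 0) ^ 2 - (Glam d a lam 0 y) ^ 2))
      (𝓝[>] (0 : ℝ))
      (𝓝 ((Glam d a 0 0 0 * rhoConst d a y - Glam d a 0 0 0 * rhoConst d a (y - x) +
            Glam d a 0 0 y * rhoConst d a x) /
          (rhoConst d a y * (Glam d a 0 0 0 + Glam d a 0 0 y)))) := by
  exact taboo_total_mass_high_dim_general hpos hneg hsum
    (LatticeWalk.isTransient_of_three_le hd3 hpos hsum hirr) hy hx hxy
end

section
/- Let d = 1 and x, y ∈ ℤ with y ≠ 0, x ≠ 0 and x ≠ y. Set H∞ := (ρ_1(x) + ρ_1(y) - ρ_1(y - x)) / (2 ρ_1(y)) and C_1(x, y) := (ρ_1(y-x) + ρ_1(x) - ρ_1(y)) / (4aπγ_1) + aπ y² γ_1³ (ρ_1(y-x) - ρ_1(x) - ρ_1(y)) / ρ_1(y)² + 2aπ x y γ_1³ / ρ_1(y). Then, as λ → 0+, H∞/λ - (G_λ(x, y) G_λ(0, 0) - G_λ(0, x) G_λ(0, y)) / (λ (G_λ(0, 0)² - G_λ(0, y)²)) = C_1(x, y) √π / √λ + o(1/√λ). -/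
open MeasureTheory Real Filter Topology Asymptotics

/-- Fourier symbol `φ(θ) = ∑_z a(z) cos(zθ)` of the random walk on `ℤ`. -/
noncomputable def phi1 (a : ℤ → ℝ) (θ : ℝ) : ℝ :=
  ∑' z : ℤ, a z * Real.cos ((z : ℝ) * θ)

/-- Transition probability `p(t;x,y) = (2π)⁻¹ ∫_{-π}^{π} e^{φ(θ)t} cos(θ(y-x)) dθ`. -/
noncomputable def p1 (a : ℤ → ℝ) (t : ℝ) (x y : ℤ) : ℝ :=
  (2 * π)⁻¹ * ∫ θ in (-π)..π, Real.exp (phi1 a θ * t) * Real.cos (θ * ((y : ℝ) - (x : ℝ)))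

/-- Laplace transform `G_λ(x,y) = ∫_0^∞ e^{-λt} p(t;x,y) dt`. -/
noncomputable def G1 (a : ℤ → ℝ) (lam : ℝ) (x y : ℤ) : ℝ :=
  ∫ t in Set.Ioi (0 : ℝ), Real.exp (-lam * t) * p1 a t x y

/-- `φ''(0) = -∑_z a(z) z²`. -/
noncomputable def phi1'' (a : ℤ → ℝ) : ℝ := -∑' z : ℤ, a z * (z : ℝ) ^ 2

/-- `γ₁ = 1/√(2π |φ''(0)|)`. -/
noncomputable def gam1 (a : ℤ → ℝ) : ℝ := 1 / Real.sqrt (2 * π * |phi1'' a|)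

/-- `ρ₁(r) = (a/(2π)) ∫_{-π}^{π} (cos(rθ) - 1)/φ(θ) dθ` for `r ≠ 0`, and `ρ₁(0) = 1`. -/
noncomputable def rho1 (a : ℤ → ℝ) (r : ℤ) : ℝ :=
  if r = 0 then 1 else
    (-(a 0) / (2 * π)) * ∫ θ in (-π)..π, (Real.cos ((r : ℝ) * θ) - 1) / phi1 a θ

/-- `γ̃₁(r) = (r²/(4π)) ∫_ℝ v² e^{φ''(0)v²/2} dv`. -/
noncomputable def gamTilde1 (a : ℤ → ℝ) (r : ℤ) : ℝ :=
  ((r : ℝ) ^ 2 / (4 * π)) * ∫ v : ℝ, v ^ 2 * Real.exp (phi1'' a * v ^ 2 / 2)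

/-- The constant `C₁(x,y)` from Theorem 1 of the paper (with `a = -a(0)`). -/
noncomputable def C1Const (a : ℤ → ℝ) (x y : ℤ) : ℝ :=
  (rho1 a (y - x) + rho1 a x - rho1 a y) / (4 * (-(a 0)) * π * gam1 a) +
    (-(a 0)) * π * (y : ℝ) ^ 2 * gam1 a ^ 3 *
      (rho1 a (y - x) - rho1 a x - rho1 a y) / (rho1 a y) ^ 2 +
    2 * (-(a 0)) * π * (x : ℝ) * (y : ℝ) * gam1 a ^ 3 / rho1 a y

/-!
Write `φ(θ) = -θ² q(θ)`. Finite variance makes `q` continuous, and irreducibility makes it positive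
on `[-π, π]`, so `√λ / (λ + θ² q(θ))` concentrates at `θ = 0` with mass `π / √q(0)`. Applied to the
Fourier representation of the resolvent, this gives `√λ G_λ(0, 0) → √π γ₁` and
`G_λ(0, 0) - G_λ(x, y) = A(y - x) - 2 π^{3/2} γ₁³ (y - x)² √λ + o(√λ)`, where `A` is the potential
kernel and `ρ₁ = -a(0) A` away from `0`. In terms of the differences `G_λ(0, 0) - G_λ(·, ·)` the
quotient splits into a part converging to `H∞` with an error of order `√λ`, and a part of order
`1 / G_λ(0, 0)`, hence also of order `√λ`; these are the two kinds of terms in `C₁`.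
-/

section SinHalfQuot

/-- The continuous extension of `sin (r θ / 2) / θ` to `θ = 0`, so that
`2 * sinHalfQuot r θ ^ 2` is the continuous extension of `(1 - cos (r θ)) / θ ^ 2`. -/
noncomputable def sinHalfQuot (r θ : ℝ) : ℝ :=
  r / 2 * sinc (r * θ / 2)

theorem continuous_sinHalfQuot (r : ℝ) : Continuous (sinHalfQuot r) :=
  continuous_const.mul (continuous_sinc.comp (by fun_prop))

theorem sinHalfQuot_zero_right (r : ℝ) : sinHalfQuot r 0 = r / 2 := by
  simp [sinHalfQuot]

theorem mul_sinHalfQuot (r θ : ℝ) : θ * sinHalfQuot r θ = sin (r * θ / 2) := by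
  rcases eq_or_ne (r * θ / 2) 0 with h | h
  · rw [h, sin_zero, sinHalfQuot, h, sinc_zero]
    linarith
  · rw [sinHalfQuot, sinc_of_ne_zero h, ← mul_assoc, show θ * (r / 2) = r * θ / 2 by ring,
      mul_div_cancel₀ _ h]

theorem one_sub_cos_mul (r θ : ℝ) :
    1 - cos (r * θ) = θ ^ 2 * (2 * sinHalfQuot r θ ^ 2) := by
  have h : cos (r * θ) = 2 * cos (r * θ / 2) ^ 2 - 1 := by
    rw [← cos_two_mul, mul_div_cancel₀ _ two_ne_zero]
  calc 1 - cos (r * θ) = 2 * sin (r * θ / 2) ^ 2 := by rw [h, sin_sq]; ring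
    _ = θ ^ 2 * (2 * sinHalfQuot r θ ^ 2) := by rw [← mul_sinHalfQuot]; ring

theorem sinHalfQuot_sq_le (r θ : ℝ) : 2 * sinHalfQuot r θ ^ 2 ≤ r ^ 2 := by
  have h : sinc (r * θ / 2) ^ 2 ≤ 1 := (sq_le_one_iff_abs_le_one _).2 (abs_sinc_le_one _)
  rw [sinHalfQuot, mul_pow]
  nlinarith [sq_nonneg r]

theorem sinHalfQuot_add (r s θ : ℝ) :
    sinHalfQuot (r + s) θ =
      sinHalfQuot r θ * cos (s * θ / 2) + cos (r * θ / 2) * sinHalfQuot s θ := by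
  rcases eq_or_ne θ 0 with rfl | hθ
  · simp only [sinHalfQuot_zero_right, mul_zero, zero_div, cos_zero]
    ring
  · refine mul_left_cancel₀ hθ ?_
    rw [mul_sinHalfQuot, show (r + s) * θ / 2 = r * θ / 2 + s * θ / 2 by ring, sin_add,
      ← mul_sinHalfQuot, ← mul_sinHalfQuot]
    ring

theorem sinHalfQuot_neg (r θ : ℝ) : sinHalfQuot (-r) θ = -sinHalfQuot r θ := by
  simp only [sinHalfQuot, neg_mul, neg_div, sinc_neg]

theorem sinHalfQuot_one_ne_zero {θ : ℝ} (hθ : |θ| < 2 * π) : sinHalfQuot 1 θ ≠ 0 := by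
  rcases eq_or_ne θ 0 with rfl | hθ0
  · simp [sinHalfQuot_zero_right]
  · intro h
    obtain ⟨h₁, h₂⟩ := abs_lt.1 hθ
    have hsin : sin (θ / 2) = 0 := by
      rw [← one_mul θ, ← mul_sinHalfQuot, h, mul_zero]
    have := (sin_eq_zero_iff_of_lt_of_lt (by linarith) (by linarith)).1 hsin
    exact hθ0 (by linarith)

end SinHalfQuot

section SymbolQuot

variable {a : ℤ → ℝ}

/-- The continuous extension of `-φ(θ) / θ ^ 2` to `θ = 0`, where `φ` is the symbol of `a`. -/
noncomputable def symbolQuot (a : ℤ → ℝ) (θ : ℝ) : ℝ :=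
  ∑' z : ℤ, a z * (2 * sinHalfQuot z θ ^ 2)

theorem phi1_eq_neg_sq_mul_symbolQuot (hsum : HasSum a 0) (θ : ℝ) :
    phi1 a θ = -(θ ^ 2 * symbolQuot a θ) := by
  have hcos : Summable fun z : ℤ => a z * cos (z * θ) := by
    refine Summable.of_norm_bounded hsum.summable.abs fun z => ?_
    rw [norm_mul, norm_eq_abs, norm_eq_abs]
    exact mul_le_of_le_one_right (abs_nonneg _) (abs_cos_le_one _)
  have h : HasSum (fun z : ℤ => a z * (1 - cos (z * θ))) (-phi1 a θ) := by
    simpa only [mul_sub, mul_one, phi1, zero_sub] using hsum.sub hcos.hasSum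
  rw [← neg_eq_iff_eq_neg, ← h.tsum_eq, symbolQuot, ← tsum_mul_left]
  refine tsum_congr fun z => ?_
  rw [one_sub_cos_mul, mul_left_comm]

theorem phi1''_eq_neg_two_mul_symbolQuot_zero : phi1'' a = -(2 * symbolQuot a 0) := by
  rw [phi1'', symbolQuot, ← tsum_mul_left]
  congr 1
  refine tsum_congr fun z => ?_
  rw [sinHalfQuot_zero_right]
  ring

theorem norm_mul_sinHalfQuot_sq_le (z : ℤ) (θ : ℝ) :
    ‖a z * (2 * sinHalfQuot z θ ^ 2)‖ ≤ |(z : ℝ) ^ 2 * a z| := by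
  rw [norm_mul, abs_mul, abs_of_nonneg (sq_nonneg (z : ℝ)), mul_comm, norm_eq_abs (a z),
    norm_of_nonneg (by positivity)]
  exact mul_le_mul_of_nonneg_right (sinHalfQuot_sq_le _ _) (abs_nonneg _)

theorem continuous_symbolQuot (hvar : Summable fun z : ℤ => (z : ℝ) ^ 2 * a z) :
    Continuous (symbolQuot a) := by
  refine continuous_tsum (fun z => ?_) hvar.abs norm_mul_sinHalfQuot_sq_le
  have := continuous_sinHalfQuot z
  fun_prop

/-- The zeros of `z ↦ sinHalfQuot z θ` form a subgroup, so they cannot contain all the `z` with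
`a z > 0`. -/
theorem symbolQuot_pos (hpos : ∀ z : ℤ, z ≠ 0 → 0 ≤ a z)
    (hvar : Summable fun z : ℤ => (z : ℝ) ^ 2 * a z)
    (hirr : AddSubgroup.closure {z : ℤ | 0 < a z} = ⊤) {θ : ℝ} (hθ : |θ| < 2 * π) :
    0 < symbolQuot a θ := by
  have hnonneg (z : ℤ) : 0 ≤ a z * (2 * sinHalfQuot z θ ^ 2) := by
    rcases eq_or_ne z 0 with rfl | hz
    · simp [sinHalfQuot]
    · exact mul_nonneg (hpos z hz) (by positivity)
  have hsummable : Summable fun z : ℤ => a z * (2 * sinHalfQuot z θ ^ 2) :=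
    .of_norm_bounded hvar.abs fun z => norm_mul_sinHalfQuot_sq_le z θ
  obtain ⟨z, hz, hzθ⟩ : ∃ z : ℤ, 0 < a z ∧ sinHalfQuot z θ ≠ 0 := by
    by_contra! hzero
    have hclosure : ∀ z ∈ AddSubgroup.closure {z : ℤ | 0 < a z}, sinHalfQuot z θ = 0 := by
      intro z hz
      induction hz using AddSubgroup.closure_induction with
      | mem z hz => exact hzero z hz
      | zero => simp [sinHalfQuot]
      | add u v _ _ hu hv =>
        rw [Int.cast_add, sinHalfQuot_add, hu, hv, zero_mul, mul_zero, add_zero]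
      | neg u _ hu => rw [Int.cast_neg, sinHalfQuot_neg, hu, neg_zero]
    refine sinHalfQuot_one_ne_zero hθ ?_
    simpa only [Int.cast_one] using hclosure 1 (hirr ▸ AddSubgroup.mem_top 1)
  exact hsummable.tsum_pos hnonneg z (by positivity)

theorem gam1_eq (h : 0 ≤ symbolQuot a 0) : gam1 a = 1 / (2 * √π * √(symbolQuot a 0)) := by
  have habs : |phi1'' a| = 2 * symbolQuot a 0 := by
    rw [phi1''_eq_neg_two_mul_symbolQuot_zero, abs_neg, abs_of_nonneg (by positivity)]
  rw [gam1, habs, show 2 * π * (2 * symbolQuot a 0) = 2 ^ 2 * (π * symbolQuot a 0) by ring,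
    sqrt_mul (by positivity), sqrt_mul pi_nonneg, sqrt_sq two_pos.le, mul_assoc]

theorem gam1_pos (h : 0 < symbolQuot a 0) : 0 < gam1 a := by
  have := pi_pos
  rw [gam1_eq h.le]
  positivity

end SymbolQuot

section PoissonKernel

theorem integral_inv_one_add_sq_mul {s : ℝ} (hs : 0 < s) :
    ∫ u : ℝ, (1 + u ^ 2 * s)⁻¹ = π / √s := by
  have h := Measure.integral_comp_mul_left (fun u : ℝ => (1 + u ^ 2)⁻¹) √s
  rw [integral_univ_inv_one_add_sq, smul_eq_mul, abs_of_nonneg (by positivity)] at h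
  simpa only [mul_pow, sq_sqrt hs.le, mul_comm s, div_eq_inv_mul] using h

theorem integrable_inv_one_add_sq_mul {s : ℝ} (hs : 0 < s) :
    Integrable fun u : ℝ => (1 + u ^ 2 * s)⁻¹ := by
  have h := integrable_inv_one_add_sq.comp_mul_left' (sqrt_pos.2 hs).ne'
  simpa only [mul_pow, sq_sqrt hs.le, mul_comm s] using h

theorem intervalIntegral_eq_mul_integral_indicator_comp_mul {A B s : ℝ} (hAB : A ≤ B)
    (hs : 0 < s) (h : ℝ → ℝ) :
    ∫ θ in A..B, h θ = s * ∫ u : ℝ, (Set.Ioc A B).indicator h (s * u) := by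
  rw [Measure.integral_comp_mul_left ((Set.Ioc A B).indicator h), abs_of_pos (inv_pos.2 hs),
    smul_eq_mul, mul_inv_cancel_left₀ hs.ne', integral_indicator measurableSet_Ioc,
    intervalIntegral.integral_of_le hAB]

theorem tendsto_sqrt_nhdsGT_zero : Tendsto sqrt (𝓝[>] 0) (𝓝[>] 0) := by
  refine tendsto_nhdsWithin_iff.2 ⟨?_, ?_⟩
  · simpa only [sqrt_zero] using (continuous_sqrt.tendsto 0).mono_left nhdsWithin_le_nhds
  · filter_upwards [self_mem_nhdsWithin] with lam hlam using sqrt_pos.2 hlam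

variable {f g q : ℝ → ℝ} {A B : ℝ}

theorem continuousOn_div_add_sq_mul (hf : ContinuousOn f (Set.Icc A B))
    (hq : ContinuousOn q (Set.Icc A B)) (hqpos : ∀ θ ∈ Set.Icc A B, 0 < q θ) {lam : ℝ}
    (hlam : 0 < lam) :
    ContinuousOn (fun θ => f θ / (lam + θ ^ 2 * q θ)) (Set.Icc A B) := by
  refine hf.div (by fun_prop) fun θ hθ => ?_
  have := hqpos θ hθ
  positivity

theorem rescaled_indicator_eq {lam : ℝ} (hlam : 0 < lam) (u : ℝ) :
    lam * (Set.Ioc A B).indicator (fun θ => f θ / (lam + θ ^ 2 * q θ)) (√lam * u) =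
      (Set.Ioc A B).indicator (fun θ => f θ / (1 + u ^ 2 * q θ)) (√lam * u) := by
  by_cases hu : √lam * u ∈ Set.Ioc A B
  · rw [Set.indicator_of_mem hu, Set.indicator_of_mem hu, mul_pow, sq_sqrt hlam.le,
      show lam + lam * u ^ 2 * q (√lam * u) = lam * (1 + u ^ 2 * q (√lam * u)) by ring,
      ← mul_div_assoc, mul_div_mul_left _ _ hlam.ne']
  · rw [Set.indicator_of_notMem hu, Set.indicator_of_notMem hu, mul_zero]

theorem norm_indicator_div_one_add_sq_mul_le {M c : ℝ} (hc : 0 < c)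
    (hM : ∀ θ ∈ Set.Icc A B, ‖f θ‖ ≤ M) (hcq : ∀ θ ∈ Set.Icc A B, c ≤ q θ) (u v : ℝ) :
    ‖(Set.Ioc A B).indicator (fun θ => f θ / (1 + u ^ 2 * q θ)) v‖ ≤
      |M| * (1 + u ^ 2 * c)⁻¹ := by
  by_cases hv : v ∈ Set.Ioc A B
  · have hvIcc := Set.Ioc_subset_Icc_self hv
    have hcv := hcq v hvIcc
    have hqv : 0 < q v := hc.trans_le hcv
    rw [Set.indicator_of_mem hv, norm_div, norm_of_nonneg (r := 1 + u ^ 2 * q v) (by positivity),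
      ← div_eq_mul_inv]
    gcongr
    exact (hM v hvIcc).trans (le_abs_self M)
  · rw [Set.indicator_of_notMem hv, norm_zero]
    positivity

theorem tendsto_indicator_div_one_add_sq_mul (hA : A < 0) (hB : 0 < B)
    (hf : ContinuousOn f (Set.Icc A B)) (hq : ContinuousOn q (Set.Icc A B)) (hq0 : 0 < q 0)
    (u : ℝ) :
    Tendsto
      (fun lam => (Set.Ioc A B).indicator (fun θ => f θ / (1 + u ^ 2 * q θ)) (√lam * u))
      (𝓝[>] 0) (𝓝 (f 0 * (1 + u ^ 2 * q 0)⁻¹)) := by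
  have hIcc : Set.Icc A B ∈ 𝓝 0 := Icc_mem_nhds hA hB
  have hcont : ContinuousAt (fun θ => f θ / (1 + u ^ 2 * q θ)) 0 :=
    (hf.continuousAt hIcc).div (by have := hq.continuousAt hIcc; fun_prop) (by positivity)
  have hind : ContinuousAt ((Set.Ioc A B).indicator fun θ => f θ / (1 + u ^ 2 * q θ)) 0 :=
    hcont.congr_of_eventuallyEq <|
      eventuallyEq_of_mem (Ioc_mem_nhds hA hB) fun _ hθ => Set.indicator_of_mem hθ _
  have hsqrt : Tendsto sqrt (𝓝[>] 0) (𝓝 0) :=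
    tendsto_sqrt_nhdsGT_zero.mono_right nhdsWithin_le_nhds
  have hscale : Tendsto (fun lam => √lam * u) (𝓝[>] 0) (𝓝 0) := by
    simpa only [zero_mul] using hsqrt.mul_const u
  have h0 : (0 : ℝ) ∈ Set.Ioc A B := ⟨hA, hB.le⟩
  simpa only [Set.indicator_of_mem h0, div_eq_mul_inv, Function.comp_def] using
    hind.tendsto.comp hscale

/-- After the substitution `θ = √λ u` the integrand tends to `f 0 / (1 + u ^ 2 * q 0)`, dominated
by a multiple of `1 / (1 + u ^ 2 * min q)`. -/
theorem tendsto_sqrt_mul_integral_div_add_sq_mul (hA : A < 0) (hB : 0 < B)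
    (hf : ContinuousOn f (Set.Icc A B)) (hq : ContinuousOn q (Set.Icc A B))
    (hqpos : ∀ θ ∈ Set.Icc A B, 0 < q θ) :
    Tendsto (fun lam => √lam * ∫ θ in A..B, f θ / (lam + θ ^ 2 * q θ)) (𝓝[>] 0)
      (𝓝 (f 0 * (π / √(q 0)))) := by
  have h0 : (0 : ℝ) ∈ Set.Icc A B := ⟨hA.le, hB.le⟩
  obtain ⟨M, hM⟩ := isCompact_Icc.exists_bound_of_continuousOn hf
  obtain ⟨θ₀, hθ₀, hmin⟩ := isCompact_Icc.exists_isMinOn ⟨0, h0⟩ hq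
  rw [← integral_inv_one_add_sq_mul (hqpos 0 h0), ← integral_const_mul]
  have hscaled : ∀ᶠ lam in 𝓝[>] 0,
      ∫ u : ℝ, lam * (Set.Ioc A B).indicator (fun θ => f θ / (lam + θ ^ 2 * q θ)) (√lam * u) =
        √lam * ∫ θ in A..B, f θ / (lam + θ ^ 2 * q θ) := by
    filter_upwards [self_mem_nhdsWithin] with lam (hlam : 0 < lam)
    rw [intervalIntegral_eq_mul_integral_indicator_comp_mul (hA.trans hB).le (sqrt_pos.2 hlam),
      ← mul_assoc, mul_self_sqrt hlam.le, integral_const_mul]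
  refine Tendsto.congr' hscaled (tendsto_integral_filter_of_dominated_convergence
    (fun u => |M| * (1 + u ^ 2 * q θ₀)⁻¹) ?_ ?_
    ((integrable_inv_one_add_sq_mul (hqpos θ₀ hθ₀)).const_mul _) (.of_forall fun u => ?_))
  · filter_upwards [self_mem_nhdsWithin] with lam (hlam : 0 < lam)
    have hint : IntegrableOn (fun θ => f θ / (lam + θ ^ 2 * q θ)) (Set.Ioc A B) :=
      (continuousOn_div_add_sq_mul hf hq hqpos hlam).integrableOn_Icc.mono_set
        Set.Ioc_subset_Icc_self
    exact (((hint.integrable_indicator measurableSet_Ioc).comp_mul_left'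
      (sqrt_pos.2 hlam).ne').const_mul lam).aestronglyMeasurable
  · filter_upwards [self_mem_nhdsWithin] with lam (hlam : 0 < lam)
    refine .of_forall fun u => ?_
    rw [rescaled_indicator_eq hlam]
    exact norm_indicator_div_one_add_sq_mul_le (hqpos θ₀ hθ₀) hM hmin u _
  · refine (tendsto_indicator_div_one_add_sq_mul hA hB hf hq (hqpos 0 h0) u).congr' ?_
    filter_upwards [self_mem_nhdsWithin] with lam (hlam : 0 < lam)
    exact (rescaled_indicator_eq hlam u).symm

theorem tendsto_integral_sub_integral_div_sqrt (hA : A < 0) (hB : 0 < B)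
    (hg : ContinuousOn g (Set.Icc A B)) (hq : ContinuousOn q (Set.Icc A B))
    (hqpos : ∀ θ ∈ Set.Icc A B, 0 < q θ) :
    Tendsto
      (fun lam => ((∫ θ in A..B, g θ / q θ) -
        ∫ θ in A..B, θ ^ 2 * g θ / (lam + θ ^ 2 * q θ)) / √lam) (𝓝[>] 0)
      (𝓝 (g 0 * (π / √(q 0) ^ 3))) := by
  have h0 := hqpos 0 ⟨hA.le, hB.le⟩
  have hAB := (hA.trans hB).le
  have hgq : ContinuousOn (fun θ => g θ / q θ) (Set.Icc A B) :=
    hg.div hq fun θ hθ => (hqpos θ hθ).ne'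
  have hlim : g 0 / q 0 * (π / √(q 0)) = g 0 * (π / √(q 0) ^ 3) := by
    rw [pow_succ, sq_sqrt h0.le]
    ring
  rw [← hlim]
  refine (tendsto_sqrt_mul_integral_div_add_sq_mul hA hB hgq hq hqpos).congr' ?_
  filter_upwards [self_mem_nhdsWithin] with lam (hlam : 0 < lam)
  have hdiff : (∫ θ in A..B, g θ / q θ) - ∫ θ in A..B, θ ^ 2 * g θ / (lam + θ ^ 2 * q θ) =
      lam * ∫ θ in A..B, g θ / q θ / (lam + θ ^ 2 * q θ) := by
    rw [← intervalIntegral.integral_sub (hgq.intervalIntegrable_of_Icc hAB)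
      ((continuousOn_div_add_sq_mul (by fun_prop) hq hqpos hlam).intervalIntegrable_of_Icc hAB),
      ← intervalIntegral.integral_const_mul]
    refine intervalIntegral.integral_congr fun θ hθ => ?_
    rw [Set.uIcc_of_le hAB] at hθ
    have hqθ := hqpos θ hθ
    have : lam + θ ^ 2 * q θ ≠ 0 := by positivity
    field_simp
    ring
  rw [hdiff, mul_div_right_comm, div_sqrt]

end PoissonKernel

theorem integral_exp_neg_mul_integral_exp_mul {α : Type*} [MeasurableSpace α] {μ : Measure α}
    [SFinite μ] {φ w : α → ℝ} (hφ : AEMeasurable φ μ) (hφ0 : ∀ᵐ x ∂μ, φ x ≤ 0)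
    (hw : Integrable w μ) {lam : ℝ} (hlam : 0 < lam) :
    ∫ t in Set.Ioi (0 : ℝ), exp (-lam * t) * ∫ x, exp (φ x * t) * w x ∂μ =
      ∫ x, w x / (lam - φ x) ∂μ := by
  simp_rw [← integral_const_mul]
  rw [integral_integral_swap]
  · refine integral_congr_ae ?_
    filter_upwards [hφ0] with x hx
    have hexp (t : ℝ) :
        exp (-lam * t) * (exp (φ x * t) * w x) = exp ((φ x - lam) * t) * w x := by
      rw [← mul_assoc, ← exp_add]
      ring_nf
    simp_rw [hexp]
    rw [integral_mul_const, integral_exp_mul_Ioi (by linarith), mul_zero, exp_zero, neg_div,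
      ← div_neg, neg_sub, one_div_mul_eq_div]
  · refine ((exp_neg_integrableOn_Ioi 0 hlam).mul_prod hw.norm).mono' ?_ ?_
    · have := hφ.comp_snd (μ := volume.restrict (Set.Ioi (0 : ℝ)))
      have := hw.aestronglyMeasurable.aemeasurable.comp_snd
        (μ := volume.restrict (Set.Ioi (0 : ℝ)))
      exact AEMeasurable.aestronglyMeasurable (by fun_prop)
    · filter_upwards [Measure.quasiMeasurePreserving_fst.ae (ae_restrict_mem measurableSet_Ioi),
        Measure.quasiMeasurePreserving_snd.ae hφ0] with p ht hx
      have hle : exp (φ p.2 * p.1) ≤ 1 :=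
        exp_le_one_iff.2 (mul_nonpos_of_nonpos_of_nonneg hx (le_of_lt ht))
      simp only [Function.uncurry, norm_mul, norm_eq_abs, abs_exp]
      gcongr
      exact mul_le_of_le_one_left (abs_nonneg _) hle

section GreenFunction

variable {a : ℤ → ℝ}

/-- The potential kernel `(2π)⁻¹ ∫_{-π}^{π} (cos (r θ) - 1) / φ(θ) dθ` of the walk, with the
integrand extended continuously to `θ = 0`. -/
noncomputable def potentialKernel (a : ℤ → ℝ) (r : ℤ) : ℝ :=
  (2 * π)⁻¹ * ∫ θ in (-π)..π, 2 * sinHalfQuot r θ ^ 2 / symbolQuot a θ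

theorem rho1_eq_mul_potentialKernel (hsum : HasSum a 0) {r : ℤ} (hr : r ≠ 0) :
    rho1 a r = -a 0 * potentialKernel a r := by
  have hint : ∫ θ in (-π)..π, (cos (r * θ) - 1) / phi1 a θ =
      ∫ θ in (-π)..π, 2 * sinHalfQuot r θ ^ 2 / symbolQuot a θ := by
    refine intervalIntegral.integral_congr_ae ?_
    filter_upwards [Measure.ae_ne volume (0 : ℝ)] with θ hθ _
    rw [phi1_eq_neg_sq_mul_symbolQuot hsum, ← neg_sub, one_sub_cos_mul, neg_div_neg_eq,
      mul_div_mul_left _ _ (pow_ne_zero 2 hθ)]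
  rw [rho1, if_neg hr, hint, potentialKernel]
  ring

theorem potentialKernel_pos (hqc : Continuous (symbolQuot a))
    (hqpos : ∀ θ ∈ Set.Icc (-π) π, 0 < symbolQuot a θ) {r : ℤ} (hr : r ≠ 0) :
    0 < potentialKernel a r := by
  have hpi := pi_pos
  have h0 : (0 : ℝ) ∈ Set.Icc (-π) π := ⟨by linarith, hpi.le⟩
  have hcont := continuous_sinHalfQuot r
  refine mul_pos (by positivity) (intervalIntegral.integral_pos (by linarith)
    (ContinuousOn.div (by fun_prop) (by fun_prop) fun θ hθ => (hqpos θ hθ).ne')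
    (fun θ hθ => ?_) ⟨0, h0, ?_⟩)
  · have := hqpos θ (Set.Ioc_subset_Icc_self hθ)
    positivity
  · have := hqpos 0 h0
    rw [sinHalfQuot_zero_right]
    positivity

theorem G1_eq_integral (hsum : HasSum a 0) (hqc : Continuous (symbolQuot a))
    (hqpos : ∀ θ ∈ Set.Icc (-π) π, 0 < symbolQuot a θ) {lam : ℝ} (hlam : 0 < lam) (x y : ℤ) :
    G1 a lam x y = (2 * π)⁻¹ *
      ∫ θ in (-π)..π, cos ((y - x : ℤ) * θ) / (lam + θ ^ 2 * symbolQuot a θ) := by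
  have hpi : -π ≤ π := neg_le_self pi_nonneg
  have hphi : phi1 a = fun θ => -(θ ^ 2 * symbolQuot a θ) :=
    funext (phi1_eq_neg_sq_mul_symbolQuot hsum)
  have hphi0 : ∀ᵐ θ ∂volume.restrict (Set.Ioc (-π) π), phi1 a θ ≤ 0 := by
    filter_upwards [ae_restrict_mem measurableSet_Ioc] with θ hθ
    have := hqpos θ (Set.Ioc_subset_Icc_self hθ)
    rw [hphi, neg_nonpos]
    positivity
  have hcos : IntegrableOn (fun θ => cos (θ * ((y : ℝ) - x))) (Set.Ioc (-π) π) :=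
    Continuous.integrableOn_Ioc (by fun_prop)
  have hmeas : Measurable (phi1 a) := by
    rw [hphi]
    exact Continuous.measurable (by fun_prop)
  simp only [G1, p1, intervalIntegral.integral_of_le hpi, mul_left_comm _ (2 * π)⁻¹]
  rw [integral_const_mul, integral_exp_neg_mul_integral_exp_mul hmeas.aemeasurable hphi0 hcos hlam]
  simp only [hphi, sub_neg_eq_add, Int.cast_sub, mul_comm]

theorem G1_diag_sub_eq_integral (hsum : HasSum a 0) (hqc : Continuous (symbolQuot a))
    (hqpos : ∀ θ ∈ Set.Icc (-π) π, 0 < symbolQuot a θ) {lam : ℝ} (hlam : 0 < lam) (x y : ℤ) :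
    G1 a lam 0 0 - G1 a lam x y = (2 * π)⁻¹ *
      ∫ θ in (-π)..π, θ ^ 2 * (2 * sinHalfQuot (y - x : ℤ) θ ^ 2) /
        (lam + θ ^ 2 * symbolQuot a θ) := by
  have hint {f : ℝ → ℝ} (hf : Continuous f) : IntervalIntegrable
      (fun θ => f θ / (lam + θ ^ 2 * symbolQuot a θ)) volume (-π) π :=
    (continuousOn_div_add_sq_mul hf.continuousOn hqc.continuousOn hqpos
      hlam).intervalIntegrable_of_Icc (neg_le_self pi_nonneg)
  rw [G1_eq_integral hsum hqc hqpos hlam, G1_eq_integral hsum hqc hqpos hlam, ← mul_sub,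
    ← intervalIntegral.integral_sub (hint (by fun_prop)) (hint (by fun_prop))]
  simp only [sub_self, Int.cast_zero, zero_mul, cos_zero, ← sub_div, one_sub_cos_mul]

theorem tendsto_sqrt_mul_G1_diag (hsum : HasSum a 0) (hqc : Continuous (symbolQuot a))
    (hqpos : ∀ θ ∈ Set.Icc (-π) π, 0 < symbolQuot a θ) :
    Tendsto (fun lam => √lam * G1 a lam 0 0) (𝓝[>] 0) (𝓝 (√π * gam1 a)) := by
  have hpi := pi_pos
  have h0 := hqpos 0 ⟨by linarith, hpi.le⟩
  have h := (tendsto_sqrt_mul_integral_div_add_sq_mul (neg_neg_of_pos hpi) hpi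
    (continuousOn_const (c := (1 : ℝ))) hqc.continuousOn hqpos).const_mul (2 * π)⁻¹
  have hlim : (2 * π)⁻¹ * (1 * (π / √(symbolQuot a 0))) = √π * gam1 a := by
    rw [gam1_eq h0.le]
    field_simp
  rw [hlim] at h
  refine h.congr' ?_
  filter_upwards [self_mem_nhdsWithin] with lam hlam
  rw [G1_eq_integral hsum hqc hqpos hlam, mul_left_comm]
  simp only [sub_self, Int.cast_zero, zero_mul, cos_zero]

theorem tendsto_potentialKernel_sub_div_sqrt (hsum : HasSum a 0)
    (hqc : Continuous (symbolQuot a)) (hqpos : ∀ θ ∈ Set.Icc (-π) π, 0 < symbolQuot a θ)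
    (x y : ℤ) :
    Tendsto
      (fun lam => (potentialKernel a (y - x) - (G1 a lam 0 0 - G1 a lam x y)) / √lam) (𝓝[>] 0)
      (𝓝 (2 * π * √π * gam1 a ^ 3 * ((y : ℝ) - x) ^ 2)) := by
  have hpi := pi_pos
  have h0 := hqpos 0 ⟨by linarith, hpi.le⟩
  have hcont := continuous_sinHalfQuot (y - x : ℤ)
  have h := (tendsto_integral_sub_integral_div_sqrt (neg_neg_of_pos hpi) hpi
    (g := fun θ => 2 * sinHalfQuot (y - x : ℤ) θ ^ 2) (by fun_prop) hqc.continuousOn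
    hqpos).const_mul (2 * π)⁻¹
  have hlim : (2 * π)⁻¹ * (2 * sinHalfQuot (y - x : ℤ) 0 ^ 2 * (π / √(symbolQuot a 0) ^ 3)) =
      2 * π * √π * gam1 a ^ 3 * ((y : ℝ) - x) ^ 2 := by
    rw [gam1_eq h0.le, sinHalfQuot_zero_right, Int.cast_sub]
    field_simp
    rw [show √π ^ 2 = π from sq_sqrt hpi.le]
    ring
  rw [hlim] at h
  refine h.congr' ?_
  filter_upwards [self_mem_nhdsWithin] with lam hlam
  rw [G1_diag_sub_eq_integral hsum hqc hqpos hlam, potentialKernel, ← mul_sub, mul_div_assoc]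

end GreenFunction

section TabooQuotient

theorem tendsto_of_tendsto_sub_div {α : Type*} {l : Filter α} {ε D : α → ℝ} {R δ : ℝ}
    (hε : Tendsto ε l (𝓝[≠] 0)) (hD : Tendsto (fun i => (R - D i) / ε i) l (𝓝 δ)) :
    Tendsto D l (𝓝 R) := by
  obtain ⟨hε0, hne⟩ := tendsto_nhdsWithin_iff.1 hε
  have h := (hε0.mul hD).const_sub R
  rw [zero_mul, sub_zero] at h
  refine h.congr' ?_
  filter_upwards [hne] with i hi
  rw [mul_div_cancel₀ _ hi, sub_sub_cancel]

/-- Writing `D = G₀ - G`, the quotient differs from `(Dx + Dy - Dz) / (2 Dy)` by exactly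
`(Dx + Dz - Dy) / (2 (2 G₀ - Dy))`, which carries the contribution of `G₀`. -/
theorem taboo_quotient_eq {G₀ Gx Gy Gz : ℝ} (hsub : G₀ - Gy ≠ 0) (hadd : G₀ + Gy ≠ 0) :
    (Gz * G₀ - Gx * Gy) / (G₀ ^ 2 - Gy ^ 2) =
      ((G₀ - Gx) + (G₀ - Gy) - (G₀ - Gz)) / (2 * (G₀ - Gy)) -
        ((G₀ - Gx) + (G₀ - Gz) - (G₀ - Gy)) / (2 * (G₀ + Gy)) := by
  rw [sq_sub_sq]
  field_simp
  ring

theorem tendsto_taboo_quotient {α : Type*} {l : Filter α} {ε G₀ Gx Gy Gz : α → ℝ}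
    {u Rx Ry Rz δx δy δz : ℝ} (hε : Tendsto ε l (𝓝[≠] 0)) (hu : u ≠ 0) (hRy : Ry ≠ 0)
    (h₀ : Tendsto (fun i => ε i * G₀ i) l (𝓝 u))
    (hx : Tendsto (fun i => (Rx - (G₀ i - Gx i)) / ε i) l (𝓝 δx))
    (hy : Tendsto (fun i => (Ry - (G₀ i - Gy i)) / ε i) l (𝓝 δy))
    (hz : Tendsto (fun i => (Rz - (G₀ i - Gz i)) / ε i) l (𝓝 δz)) :
    Tendsto (fun i => ((Rx + Ry - Rz) / (2 * Ry) -
        (Gz i * G₀ i - Gx i * Gy i) / (G₀ i ^ 2 - Gy i ^ 2)) / ε i) l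
      (𝓝 ((Ry * (δx + δy - δz) - (Rx + Ry - Rz) * δy) / (2 * Ry * Ry) +
        (Rx + Rz - Ry) / (4 * u))) := by
  have hDx := tendsto_of_tendsto_sub_div hε hx
  have hDy := tendsto_of_tendsto_sub_div hε hy
  have hDz := tendsto_of_tendsto_sub_div hε hz
  obtain ⟨hε0, hne⟩ := tendsto_nhdsWithin_iff.1 hε
  have hadd : Tendsto (fun i => ε i * (G₀ i + Gy i)) l (𝓝 (2 * u)) := by
    have h := (h₀.const_mul 2).sub (hε0.mul hDy)
    rw [zero_mul, sub_zero] at h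
    exact h.congr fun i => by ring
  have hfirst := (((hx.add hy).sub hz).const_mul Ry |>.sub (hy.const_mul (Rx + Ry - Rz))).div
    (hDy.const_mul (2 * Ry)) (by simp [hRy])
  have hsecond := ((hDx.add hDz).sub hDy).div (hadd.const_mul 2) (by simp [hu])
  rw [show 2 * (2 * u) = 4 * u by ring] at hsecond
  refine (hfirst.add hsecond).congr' ?_
  filter_upwards [hne, hDy.eventually_ne hRy, hadd.eventually_ne (mul_ne_zero two_ne_zero hu)]
    with i hi hsub hmul
  have hsum := right_ne_zero_of_mul hmul
  have hi : ε i ≠ 0 := hi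
  rw [taboo_quotient_eq hsub hsum]
  simp only [Pi.div_apply]
  field_simp
  ring

end TabooQuotient

theorem C1Const_mul_sqrt_pi {a : ℤ → ℝ} (ha : a 0 ≠ 0) (hsum : HasSum a 0) {x y : ℤ}
    (hx : x ≠ 0) (hy : y ≠ 0) (hxy : x ≠ y) (hRy : potentialKernel a y ≠ 0) :
    C1Const a x y * √π =
      (potentialKernel a y * (2 * π * √π * gam1 a ^ 3 * (x : ℝ) ^ 2 +
          2 * π * √π * gam1 a ^ 3 * (y : ℝ) ^ 2 -
          2 * π * √π * gam1 a ^ 3 * ((y : ℝ) - x) ^ 2) -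
        (potentialKernel a x + potentialKernel a y - potentialKernel a (y - x)) *
          (2 * π * √π * gam1 a ^ 3 * (y : ℝ) ^ 2)) /
        (2 * potentialKernel a y * potentialKernel a y) +
      (potentialKernel a x + potentialKernel a (y - x) - potentialKernel a y) /
        (4 * (√π * gam1 a)) := by
  rw [C1Const, rho1_eq_mul_potentialKernel hsum hx, rho1_eq_mul_potentialKernel hsum hy,
    rho1_eq_mul_potentialKernel hsum (sub_ne_zero.2 hxy.symm)]
  have hpi : √π ^ 2 = π := sq_sqrt pi_nonneg
  field_simp
  rw [hpi]
  ring

theorem rho1_quotient_eq {a : ℤ → ℝ} (ha : a 0 ≠ 0) (hsum : HasSum a 0) {x y : ℤ}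
    (hx : x ≠ 0) (hy : y ≠ 0) (hxy : x ≠ y) :
    (rho1 a x + rho1 a y - rho1 a (y - x)) / (2 * rho1 a y) =
      (potentialKernel a x + potentialKernel a y - potentialKernel a (y - x)) /
        (2 * potentialKernel a y) := by
  rw [rho1_eq_mul_potentialKernel hsum hx, rho1_eq_mul_potentialKernel hsum hy,
    rho1_eq_mul_potentialKernel hsum (sub_ne_zero.2 hxy.symm), ← mul_add, ← mul_sub,
    mul_left_comm, mul_div_mul_left _ _ (neg_ne_zero.2 ha)]

theorem isLittleO_one_div_sqrt {l : Filter ℝ} {h : ℝ → ℝ} {c : ℝ} (hl : ∀ᶠ lam in l, 0 < lam)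
    (hlim : Tendsto (fun lam => h lam / √lam) l (𝓝 c)) :
    (fun lam => h lam / lam - c / √lam) =o[l] fun lam => 1 / √lam := by
  rw [isLittleO_iff_tendsto']
  · rw [← sub_self c]
    refine (hlim.sub_const c).congr' ?_
    filter_upwards [hl] with lam hlam
    have hsqrt : √lam ≠ 0 := (sqrt_pos.2 hlam).ne'
    rw [div_div_eq_mul_div, div_one, sub_mul, div_mul_cancel₀ _ hsqrt, div_mul_eq_mul_div,
      mul_div_assoc, sqrt_div_self', mul_one_div]
  · filter_upwards [hl] with lam hlam h0
    exact absurd h0 (one_div_pos.2 (sqrt_pos.2 hlam)).ne'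

theorem taboo_laplace_expansion_d1_general
    (a : ℤ → ℝ)
    (hpos : ∀ z : ℤ, z ≠ 0 → 0 ≤ a z)
    (hneg : a 0 < 0)
    (hsum : HasSum a 0)
    (hvar : Summable fun z : ℤ => (z : ℝ) ^ 2 * a z)
    (hirr : AddSubgroup.closure {z : ℤ | 0 < a z} = ⊤)
    (x y : ℤ) (hy : y ≠ 0) (hx : x ≠ 0) (hxy : x ≠ y) :
    (fun lam : ℝ =>
        (rho1 a x + rho1 a y - rho1 a (y - x)) / (2 * rho1 a y) / lam -
          (G1 a lam x y * G1 a lam 0 0 - G1 a lam 0 x * G1 a lam 0 y) /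
            (lam * ((G1 a lam 0 0) ^ 2 - (G1 a lam 0 y) ^ 2)) -
          C1Const a x y * Real.sqrt π / Real.sqrt lam)
      =o[𝓝[>] (0 : ℝ)] fun lam : ℝ => 1 / Real.sqrt lam := by
  have hqc : Continuous (symbolQuot a) := continuous_symbolQuot hvar
  have hqpos : ∀ θ ∈ Set.Icc (-π) π, 0 < symbolQuot a θ := fun θ hθ =>
    symbolQuot_pos hpos hvar hirr ((abs_le.2 hθ).trans_lt (by linarith [pi_pos]))
  have hRy : potentialKernel a y ≠ 0 := (potentialKernel_pos hqc hqpos hy).ne'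
  have hgam : 0 < gam1 a := gam1_pos (hqpos 0 ⟨neg_nonpos.2 pi_nonneg, pi_nonneg⟩)
  have hR (u v : ℤ) := tendsto_potentialKernel_sub_div_sqrt hsum hqc hqpos u v
  have hRx₀ := hR 0 x
  have hRy₀ := hR 0 y
  simp only [Int.cast_zero, sub_zero] at hRx₀ hRy₀
  have hlim := tendsto_taboo_quotient
    (tendsto_sqrt_nhdsGT_zero.mono_right (nhdsGT_le_nhdsNE 0))
    (mul_pos (sqrt_pos.2 pi_pos) hgam).ne' hRy
    (tendsto_sqrt_mul_G1_diag hsum hqc hqpos) hRx₀ hRy₀ (hR x y)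
  rw [← C1Const_mul_sqrt_pi hneg.ne hsum hx hy hxy hRy] at hlim
  refine (isLittleO_one_div_sqrt self_mem_nhdsWithin hlim).congr_left fun lam => ?_
  simp only [rho1_quotient_eq hneg.ne hsum hx hy hxy, sub_div _ _ lam, mul_comm lam, div_div]

/-- For `d = 1`, `x, y ≠ 0`, `x ≠ y`: with `H∞ = (ρ₁(x) + ρ₁(y) - ρ₁(y-x))/(2ρ₁(y))`,
as `λ → 0+`,
`H∞/λ - (G_λ(x,y)G_λ(0,0) - G_λ(0,x)G_λ(0,y))/(λ(G_λ(0,0)² - G_λ(0,y)²))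
  = C₁(x,y)√π/√λ + o(1/√λ)`. -/
theorem taboo_laplace_expansion_d1
    (a : ℤ → ℝ)
    (hpos : ∀ z : ℤ, z ≠ 0 → 0 ≤ a z)
    (hneg : a 0 < 0)
    (hsymm : ∀ z : ℤ, a (-z) = a z)
    (hsum : HasSum a 0)
    (hvar : Summable fun z : ℤ => (z : ℝ) ^ 2 * a z)
    (hirr : AddSubgroup.closure {z : ℤ | 0 < a z} = ⊤)
    (x y : ℤ) (hy : y ≠ 0) (hx : x ≠ 0) (hxy : x ≠ y) :
    (fun lam : ℝ =>
        (rho1 a x + rho1 a y - rho1 a (y - x)) / (2 * rho1 a y) / lam -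
          (G1 a lam x y * G1 a lam 0 0 - G1 a lam 0 x * G1 a lam 0 y) /
            (lam * ((G1 a lam 0 0) ^ 2 - (G1 a lam 0 y) ^ 2)) -
          C1Const a x y * Real.sqrt π / Real.sqrt lam)
      =o[𝓝[>] (0 : ℝ)] fun lam : ℝ => 1 / Real.sqrt lam :=
  taboo_laplace_expansion_d1_general a hpos hneg hsum hvar hirr x y hy hx hxy
end
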